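/- arXiv:1403.4555 — 5 statements merged into one kernel-verified Lean document; each statement's English description precedes it below -/
import Mathlib

section
/- There exists a bounded linear operator T on the Banach space c₀(ℤ) (the space of two-sided sequences vanishing at infinity, with the sup norm) which is frequently hypercyclic but does not admit any ergodic T-invariant Borel probability measure with full support. -/
open MeasureTheory Filter Topology Set ZeroAtInfty

/-- The lower density of a set of natural numbers:
`liminf_{N→∞} #(A ∩ [1,N]) / N`. -/
noncomputable def lowerDensity (A : Set ℕ) : ℝ :=
  Filter.liminf (fun N : ℕ => (Nat.card ↥(A ∩ Set.Icc 1 N) : ℝ) / N) Filter.atTop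

/-- `x` is a frequently hypercyclic point for `T`. -/
def FreqHypPt {X : Type*} [TopologicalSpace X] (T : X → X) (x : X) : Prop :=
  ∀ V : Set X, IsOpen V → V.Nonempty → 0 < lowerDensity {n : ℕ | T^[n] x ∈ V}

namespace FHC

/-- The set of times at which the weight comes back to one. -/
def Gset : Set ℕ := {g | ∃ t, 3 * 16 ^ t ≤ g ∧ g < 4 * 16 ^ t ∧
  ∀ p c : ℕ, 1 ≤ c → g + 4 * p < c * 16 ^ (p + 1) ∨ c * 16 ^ (p + 1) + 4 * p < g}

/-- Logarithm of the inverse weight. -/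
noncomputable def dd (k : ℤ) : ℕ :=
  open Classical in if 0 ≤ k then k.toNat else sInf {d : ℕ | k.natAbs + d ∈ Gset}

lemma dd_nonneg {k : ℤ} (h : 0 ≤ k) : dd k = k.toNat := by simp [dd, h]

lemma dd_neg {k : ℤ} (h : k < 0) : dd k = sInf {d : ℕ | k.natAbs + d ∈ Gset} := by
  simp [dd, not_le.mpr h]

lemma dd_zero : dd 0 = 0 := by simp [dd_nonneg]

lemma dd_succ (k : ℤ) : dd (k + 1) ≤ dd k + 1 := by
  rcases lt_trichotomy k (-1) with h | h | h
  · rw [dd_neg (by omega : k + 1 < 0), dd_neg (by omega : k < 0)]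
    by_cases hS : {d : ℕ | k.natAbs + d ∈ Gset}.Nonempty
    · apply Nat.sInf_le
      have := Nat.sInf_mem hS
      simp only [mem_ofPred_eq] at this ⊢
      convert this using 1
      omega
    · by_cases hS' : {d : ℕ | (k+1).natAbs + d ∈ Gset}.Nonempty
      · obtain ⟨d, hd⟩ := hS'
        rcases d with _ | d
        · exact (Nat.sInf_le hd).trans (by omega)
        · exfalso
          apply hS
          refine ⟨d, ?_⟩
          simp only [mem_ofPred_eq] at hd ⊢
          convert hd using 1
          omega
      · rw [not_nonempty_iff_eq_empty.mp hS']; simp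
  · subst h; simp [dd_zero]
  · rw [dd_nonneg (by omega), dd_nonneg (by omega)]; omega

lemma Gset_pos {n : ℕ} (h : n ∈ Gset) : 0 < n := by
  obtain ⟨t, h1, -⟩ := h
  have : 0 < 16 ^ t := by positivity
  omega

lemma dd_neg_G {n : ℕ} (h : n ∈ Gset) : dd (-(n : ℤ)) = 0 := by
  have := Gset_pos h
  rw [dd_neg (by omega)]
  have : (0:ℕ) ∈ {d : ℕ | (-(n:ℤ)).natAbs + d ∈ Gset} := by simpa using h
  exact Nat.le_zero.mp (Nat.sInf_le this)

/-- sum of the numbers of bad residues -/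
def SS : ℕ → ℕ
  | 0 => 0
  | t + 1 => 16 * SS t + (8 * t + 1)

lemma SS_le (t : ℕ) : 4 * SS t + 3 * t + 1 ≤ 16 ^ t := by
  induction t with
  | zero => simp [SS]
  | succ t ih => simp only [SS, pow_succ]; omega

lemma SS_eq (t : ℕ) : ∑ p ∈ Finset.range t, (8 * p + 1) * 16 ^ (t - p - 1) = SS t := by
  induction t with
  | zero => simp [SS]
  | succ t ih =>
    rw [Finset.sum_range_succ, SS, ← ih, Finset.mul_sum]
    congr 1
    · apply Finset.sum_congr rfl
      intro p hp
      have : p < t := Finset.mem_range.mp hp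
      have : t + 1 - p - 1 = (t - p - 1) + 1 := by omega
      rw [this, pow_succ]; ring
    · simp

open Classical in
lemma G_count (t : ℕ) :
    16 ^ t ≤ 2 * ((Finset.range (4 * 16 ^ t)).filter (· ∈ Gset)).card := by
  set I := Finset.Ico (3 * 16 ^ t) (4 * 16 ^ t) with hI
  let bad : ℕ → Finset ℕ := fun p =>
    (Finset.Icc (3 * 16 ^ (t - p - 1)) (4 * 16 ^ (t - p - 1)) ×ˢ Finset.range (8 * p + 1)).image
      (fun cs => cs.1 * 16 ^ (p + 1) + cs.2 - 4 * p)
  have hsub : I ⊆ ((Finset.range (4 * 16 ^ t)).filter (· ∈ Gset)) ∪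
      (Finset.range t).biUnion bad := by
    intro g hg
    rw [hI, Finset.mem_Ico] at hg
    by_cases hG : g ∈ Gset
    · apply Finset.mem_union_left
      simp [hG, hg.2]
    · apply Finset.mem_union_right
      have : ∃ p c : ℕ, 1 ≤ c ∧ c * 16 ^ (p + 1) ≤ g + 4 * p ∧ g ≤ c * 16 ^ (p + 1) + 4 * p := by
        by_contra hcon
        apply hG
        refine ⟨t, hg.1, hg.2, fun p c hc => ?_⟩
        by_contra h2
        exact hcon ⟨p, c, hc, by omega, by omega⟩
      obtain ⟨p, c, hc, h1, h2⟩ := this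
      have hp : p < t := by
        by_contra hp
        have hpt : 16 ^ t ≤ 16 ^ p := Nat.pow_le_pow_right (by norm_num) (by omega)
        have hpp : p < 16 ^ p := Nat.lt_pow_self (by norm_num)
        have : 1 * 16 ^ (p + 1) ≤ c * 16 ^ (p + 1) := Nat.mul_le_mul_right _ hc
        rw [pow_succ] at *
        omega
      have h16 : 16 ^ t = 16 ^ (t - p - 1) * 16 ^ (p + 1) := by
        rw [← pow_add]; congr 1; omega
      have hpp : p < 16 ^ p := Nat.lt_pow_self (by norm_num)
      have hpp' : 4 * p < 16 ^ (p + 1) := by rw [pow_succ]; omega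
      simp only [Finset.mem_biUnion, Finset.mem_range]
      refine ⟨p, hp, ?_⟩
      simp only [bad, Finset.mem_image, Finset.mem_product, Finset.mem_Icc, Finset.mem_range,
        Prod.exists]
      refine ⟨c, g + 4 * p - c * 16 ^ (p + 1), ⟨⟨?_, ?_⟩, by omega⟩, by omega⟩
      · by_contra hlt
        have : (c + 1) * 16 ^ (p + 1) ≤ 3 * 16 ^ (t - p - 1) * 16 ^ (p + 1) :=
          Nat.mul_le_mul_right _ (by omega)
        rw [mul_assoc, ← h16, add_mul] at this
        omega
      · by_contra hlt
        have : (4 * 16 ^ (t - p - 1) + 1) * 16 ^ (p + 1) ≤ c * 16 ^ (p + 1) :=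
          Nat.mul_le_mul_right _ (by omega)
        rw [add_mul, mul_assoc, ← h16] at this
        omega
  have hcard := (Finset.card_le_card hsub).trans (Finset.card_union_le _ _)
  have hIc : I.card = 16 ^ t := by rw [hI, Nat.card_Ico]; omega
  have hbad : ((Finset.range t).biUnion bad).card ≤ 2 * SS t := by
    refine Finset.card_biUnion_le.trans ?_
    rw [← SS_eq, Finset.mul_sum]
    apply Finset.sum_le_sum
    intro p hp
    refine Finset.card_image_le.trans ?_
    rw [Finset.card_product, Nat.card_Icc, Finset.card_range]
    have : 0 < 16 ^ (t - p - 1) := by positivity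
    calc _ ≤ (2 * 16 ^ (t - p - 1)) * (8 * p + 1) := Nat.mul_le_mul_right _ (by omega)
      _ = _ := by ring
  have := SS_le t
  omega

lemma G_unbounded (a : ℕ) : ∃ g ∈ Gset, a ≤ g := by
  classical
  by_contra hcon
  push Not at hcon
  have h1 := G_count (a + 1)
  have h2 : ((Finset.range (4 * 16 ^ (a+1))).filter (· ∈ Gset)) ⊆ Finset.range a := by
    intro g hg
    simp only [Finset.mem_filter, Finset.mem_range] at hg ⊢
    exact hcon g hg.2
  have h3 := Finset.card_le_card h2
  rw [Finset.card_range] at h3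
  have : a < 16 ^ a := Nat.lt_pow_self (by norm_num)
  have h5 : 16 ^ (a + 1) = 16 ^ a * 16 := pow_succ 16 a
  omega

/-- The visiting times. -/
def ES (p : ℕ) : Set ℕ := {n | 16 ^ (p + 1) ∣ n ∧
  ∃ k, 1 ≤ k ∧ padicValNat 2 k = p ∧ 16 ^ k ≤ n ∧ n < 2 * 16 ^ k}

lemma val_lt {k : ℕ} (hk : 1 ≤ k) : padicValNat 2 k < k := by
  have h1 : 2 ^ padicValNat 2 k ≤ k := Nat.le_of_dvd hk pow_padicValNat_dvd
  exact lt_of_lt_of_le (Nat.lt_pow_self (by norm_num)) h1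

lemma ES_cases {p q m n : ℕ} (hm : m ∈ ES p) (hn : n ∈ ES q) (hmn : m < n) :
    (p = q ∧ ∃ c, 1 ≤ c ∧ n = m + c * 16 ^ (p + 1)) ∨
    (∃ l, p + 1 ≤ l ∧ q + 1 ≤ l + 1 ∧ m + 14 * 16 ^ l ≤ n ∧ n < m + 32 * 16 ^ l) := by
  obtain ⟨hdm, k, hk, hkp, hk1, hk2⟩ := hm
  obtain ⟨hdn, l, hl, hlq, hl1, hl2⟩ := hn
  rcases lt_trichotomy k l with h | h | h
  · right
    obtain ⟨l, rfl⟩ : ∃ l', l = l' + 1 := ⟨l - 1, by omega⟩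
    have h1 : 16 ^ k ≤ 16 ^ l := Nat.pow_le_pow_right (by norm_num) (by omega)
    have := val_lt hk
    have := val_lt hl
    refine ⟨l, by omega, by omega, ?_, ?_⟩
    · rw [pow_succ] at *; omega
    · rw [pow_succ] at *; omega
  · left
    subst h
    have : p = q := by rw [← hkp, ← hlq]
    subst this
    refine ⟨rfl, ?_⟩
    obtain ⟨a, ha⟩ := hdm
    obtain ⟨b, hb⟩ := hdn
    have hab : a < b := by
      by_contra hab
      have : 16 ^ (p + 1) * b ≤ 16 ^ (p+1) * a := Nat.mul_le_mul_left _ (by omega)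
      omega
    refine ⟨b - a, by omega, ?_⟩
    obtain ⟨e, rfl⟩ : ∃ e, b = a + e := ⟨b - a, by omega⟩
    rw [ha, hb]
    simp; ring
  · exfalso
    have h1 : 16 ^ (l+1) ≤ 16 ^ k := Nat.pow_le_pow_right (by norm_num) (by omega)
    rw [pow_succ] at h1
    have : 0 < 16 ^ l := by positivity
    omega

lemma ES_sep {p q m n : ℕ} (hm : m ∈ ES p) (hn : n ∈ ES q) (hmn : m < n) :
    m + 2 * (p + q) + 1 ≤ n := by
  rcases ES_cases hm hn hmn with ⟨rfl, c, hc, rfl⟩ | ⟨l, h1, h2, h3, -⟩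
  · have hpp : p < 16 ^ p := Nat.lt_pow_self (by norm_num)
    have : 1 * 16 ^ (p + 1) ≤ c * 16 ^ (p + 1) := Nat.mul_le_mul_right _ hc
    rw [pow_succ] at *
    omega
  · have hpp : l < 16 ^ l := Nat.lt_pow_self (by norm_num)
    omega

lemma ES_G {p q m n g : ℕ} (hm : m ∈ ES p) (hn : n ∈ ES q) (hmn : m < n) (hg : g ∈ Gset) :
    m + g + 2 * (p + q) < n ∨ n + 2 * (p + q) < m + g := by
  obtain ⟨t, ht1, ht2, ht⟩ := hg
  rcases ES_cases hm hn hmn with ⟨rfl, c, hc, rfl⟩ | ⟨l, h1, h2, h3, h4⟩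
  · have := ht p c hc
    omega
  · have hpp : l < 16 ^ l := Nat.lt_pow_self (by norm_num)
    rcases le_or_gt t l with h | h
    · have : 16 ^ t ≤ 16 ^ l := Nat.pow_le_pow_right (by norm_num) h
      omega
    · have : 16 ^ (l+1) ≤ 16 ^ t := Nat.pow_le_pow_right (by norm_num) h
      rw [pow_succ] at this
      omega

lemma ES_disj {p q n : ℕ} (hm : n ∈ ES p) (hn : n ∈ ES q) : p = q := by
  obtain ⟨-, k, -, hkp, hk1, hk2⟩ := hm
  obtain ⟨-, l, -, hlq, hl1, hl2⟩ := hn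
  have : k = l := by
    rcases lt_trichotomy k l with h | h | h
    · have h1 : 16 ^ (k+1) ≤ 16 ^ l := Nat.pow_le_pow_right (by norm_num) (by omega)
      rw [pow_succ] at h1
      omega
    · exact h
    · have h1 : 16 ^ (l+1) ≤ 16 ^ k := Nat.pow_le_pow_right (by norm_num) (by omega)
      rw [pow_succ] at h1
      omega
  subst this
  rw [← hkp, ← hlq]

/-- The visiting times are large. -/
lemma ES_large {p n : ℕ} (hn : n ∈ ES p) : 4 * p + 1 ≤ n := by
  obtain ⟨-, k, hk, hkp, hk1, hk2⟩ := hn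
  have := val_lt hk
  obtain ⟨l, rfl⟩ : ∃ l', k = l' + 1 := ⟨k - 1, by omega⟩
  have hpp : l < 16 ^ l := Nat.lt_pow_self (by norm_num)
  rw [pow_succ] at *
  omega

lemma dd_large {p q m n : ℕ} (hm : m ∈ ES p) (hn : n ∈ ES q) (hmn : m ≠ n) {j : ℤ}
    (hj : |j| ≤ q) : p + q ≤ dd (n - m + j) := by
  rw [abs_le] at hj
  rcases lt_or_gt_of_ne hmn with h | h
  · have := ES_sep hm hn h
    rw [dd_nonneg (by omega)]
    omega
  · have := ES_sep hn hm h
    rw [dd_neg (by omega)]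
    have hne : {d : ℕ | (n - m + j : ℤ).natAbs + d ∈ Gset}.Nonempty := by
      obtain ⟨g, hg, hle⟩ := G_unbounded (n - m + j : ℤ).natAbs
      refine ⟨g - (n - m + j : ℤ).natAbs, ?_⟩
      simp only [mem_ofPred_eq]
      convert hg using 1
      omega
    have hmem := Nat.sInf_mem hne
    have := ES_G hn hm h hmem
    omega

end FHC
namespace FHC

lemma lowerDensity_pos {A : Set ℕ} {c : ℝ} (hc : 0 < c)
    (h : ∀ᶠ N : ℕ in atTop, c ≤ (Nat.card ↥(A ∩ Set.Icc 1 N) : ℝ) / N) :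
    0 < lowerDensity A := by
  refine lt_of_lt_of_le hc ?_
  unfold lowerDensity
  refine Filter.le_liminf_of_le ?_ h
  refine Filter.IsBoundedUnder.isCoboundedUnder_ge ⟨1, ?_⟩
  rw [Filter.eventually_map]
  refine Filter.Eventually.of_forall fun N => ?_
  apply div_le_one_of_le₀ _ (by positivity)
  have : Nat.card ↥(A ∩ Set.Icc 1 N) ≤ Nat.card ↥(Set.Icc 1 N) :=
    Nat.card_mono (Set.finite_Icc 1 N) inter_subset_right
  have h2 : Nat.card ↥(Set.Icc 1 N) = N := by simp
  exact_mod_cast this.trans h2.le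

lemma val_eq (p s : ℕ) : padicValNat 2 (2 ^ p * (2 * s + 1)) = p := by
  rw [padicValNat.mul (by positivity) (by omega), padicValNat.prime_pow,
    padicValNat.eq_zero_of_not_dvd (by omega), add_zero]

lemma ES_count {p k : ℕ} (hk : 1 ≤ k) (hv : padicValNat 2 k = p) {N : ℕ} (hN : 2 * 16 ^ k ≤ N)
    {A : Set ℕ} (hA : ES p ⊆ A) : 16 ^ (k - p - 1) ≤ Nat.card ↥(A ∩ Set.Icc 1 N) := by
  have hpk := val_lt hk
  have h16 : 16 ^ k = 16 ^ (k - p - 1) * 16 ^ (p + 1) := by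
    rw [← pow_add]; congr 1; omega
  have hpos : 0 < 16 ^ k := by positivity
  have hpos' : 0 < 16 ^ (p+1) := by positivity
  let F : Finset ℕ := (Finset.range (16 ^ (k - p - 1))).image (fun c => 16 ^ k + c * 16 ^ (p + 1))
  have hF : F.card = 16 ^ (k - p - 1) := by
    rw [Finset.card_image_of_injective, Finset.card_range]
    intro a b hab
    simp only [add_right_inj] at hab
    exact Nat.eq_of_mul_eq_mul_right hpos' hab
  have hsub : (F : Set ℕ) ⊆ A ∩ Set.Icc 1 N := by
    intro n hn
    simp only [F, Finset.coe_image, Finset.coe_range, mem_image, Set.mem_Iio] at hn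
    obtain ⟨c, hc, rfl⟩ := hn
    have h1 : (c + 1) * 16 ^ (p + 1) ≤ 16 ^ k := by
      rw [h16]; exact Nat.mul_le_mul_right _ (by omega)
    rw [add_mul] at h1
    refine ⟨hA ⟨?_, k, hk, hv, by omega, by omega⟩, by constructor <;> omega⟩
    exact dvd_add (h16 ▸ dvd_mul_left _ _) (dvd_mul_left _ _)
  have h3 := Nat.card_mono ((Set.finite_Icc 1 N).subset inter_subset_right) hsub
  simpa [hF] using h3

lemma density_of_ES {p : ℕ} {A : Set ℕ} (hA : ES p ⊆ A) : 0 < lowerDensity A := by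
  set P := 2 ^ (p + 1) with hP
  have hP2 : P = 2 * 2 ^ p := by rw [hP, pow_succ]; ring
  have h2p : 0 < 2 ^ p := by positivity
  apply lowerDensity_pos (c := 1 / 16 ^ (p + P + 2)) (by positivity)
  filter_upwards [eventually_ge_atTop (16 ^ (2 ^ p + 1))] with N hN
  set L := Nat.log 16 N with hL
  have hN0 : N ≠ 0 := by
    have : 0 < 16 ^ (2 ^ p + 1) := by positivity
    omega
  have h1 : 16 ^ L ≤ N := Nat.pow_log_le_self 16 hN0
  have h2 : N < 16 ^ (L + 1) := Nat.lt_pow_succ_log_self (by norm_num) N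
  have hLp : 2 ^ p + 1 ≤ L := (Nat.le_log_iff_pow_le (by norm_num) hN0).mpr hN
  set s := (L - 1 - 2 ^ p) / P with hs
  set k := 2 ^ p * (2 * s + 1) with hk
  have hk' : k = 2 ^ p + P * s := by rw [hk, hP2]; ring
  have hPpos : 0 < P := by omega
  have hs1 : P * s ≤ L - 1 - 2 ^ p := Nat.mul_div_le _ _
  have hs2 : L - 1 - 2 ^ p < P * s + P := by
    have := Nat.lt_mul_div_succ (L - 1 - 2 ^ p) hPpos
    rwa [mul_add, mul_one] at this
  have hkL : k + 1 ≤ L := by omega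
  have hLk : L + 1 ≤ k + P + 1 := by omega
  have h3 : 2 * 16 ^ k ≤ N := by
    have : 16 ^ (k + 1) ≤ 16 ^ L := Nat.pow_le_pow_right (by norm_num) hkL
    rw [pow_succ] at this
    omega
  have hcount := ES_count (by omega) (val_eq p s) h3 hA
  have hpk := val_lt (k := k) (by omega)
  rw [hk, val_eq p s, ← hk] at hpk
  have h4 : N ≤ 16 ^ (k + P + 1) := h2.le.trans (Nat.pow_le_pow_right (by norm_num) hLk)
  have hNpos : (0:ℝ) < N := by positivity
  rw [div_le_div_iff₀ (by positivity) hNpos, one_mul]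
  have h5 : N ≤ 16 ^ (k - p - 1) * 16 ^ (p + P + 2) := by
    rw [← pow_add]; convert h4 using 2; omega
  have h6 := h5.trans (Nat.mul_le_mul_right _ hcount)
  exact_mod_cast h6

/-! ### The space -/

/-- Build an element of the space. -/
def mkC (f : ℤ → ℝ) (hf : Tendsto f cofinite (𝓝 0)) : C₀(ℤ, ℝ) where
  toFun := f
  continuous_toFun := continuous_of_discreteTopology
  zero_at_infty' := by rw [cocompact_eq_cofinite]; exact hf

@[simp] lemma mkC_apply (f : ℤ → ℝ) (hf : Tendsto f cofinite (𝓝 0)) (k : ℤ) :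
    mkC f hf k = f k := rfl

lemma tendsto_C (u : C₀(ℤ, ℝ)) : Tendsto u cofinite (𝓝 0) := by
  rw [← cocompact_eq_cofinite]; exact u.zero_at_infty'

lemma abs_le_norm (u : C₀(ℤ, ℝ)) (k : ℤ) : |u k| ≤ ‖u‖ :=
  u.toBCF.norm_coe_le_norm k

lemma norm_le_of (u : C₀(ℤ, ℝ)) {c : ℝ} (hc : 0 ≤ c) (h : ∀ k, |u k| ≤ c) : ‖u‖ ≤ c :=
  (BoundedContinuousFunction.norm_le (f := u.toBCF) hc).mpr h

lemma tendsto_of_finite {f : ℤ → ℝ} (h : ∀ ε > 0, {l | ε ≤ |f l|}.Finite) :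
    Tendsto f cofinite (𝓝 0) := by
  rw [Metric.tendsto_nhds]
  intro ε hε
  rw [Filter.eventually_cofinite]
  refine (h ε hε).subset fun l hl => ?_
  simpa using hl

lemma ratio_le (k : ℤ) : (2:ℝ) ^ dd (k + 1) / 2 ^ dd k ≤ 2 := by
  rw [div_le_iff₀ (by positivity), ← pow_succ']
  exact pow_le_pow_right₀ (by norm_num) (dd_succ k)

/-- The operator. -/
noncomputable def TT : C₀(ℤ, ℝ) →L[ℝ] C₀(ℤ, ℝ) :=
  LinearMap.mkContinuous
    { toFun := fun u => mkC (fun k => 2 ^ dd (k + 1) / 2 ^ dd k * u (k + 1)) (by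
        have h1 : Tendsto (fun k : ℤ => 2 * |u (k + 1)|) cofinite (𝓝 0) := by
          have := ((tendsto_C u).comp (add_left_injective (1:ℤ)).tendsto_cofinite).abs.const_mul 2
          simpa using this
        refine squeeze_zero_norm (fun k => ?_) h1
        rw [Real.norm_eq_abs, abs_mul, abs_of_nonneg (by positivity)]
        exact mul_le_mul_of_nonneg_right (ratio_le k) (abs_nonneg _))
      map_add' := by intro u v; ext k; simp; ring
      map_smul' := by intro a u; ext k; simp; ring } 2 (by
      intro u
      apply norm_le_of _ (by positivity)
      intro k
      simp only [LinearMap.coe_mk, AddHom.coe_mk, mkC_apply]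
      rw [abs_mul, abs_of_nonneg (by positivity)]
      exact mul_le_mul (ratio_le k) (abs_le_norm u _) (abs_nonneg _) (by norm_num))

lemma TT_apply (u : C₀(ℤ, ℝ)) (k : ℤ) : TT u k = 2 ^ dd (k + 1) / 2 ^ dd k * u (k + 1) := rfl

lemma TT_iter (n : ℕ) (u : C₀(ℤ, ℝ)) (k : ℤ) :
    (TT^[n] u) k = 2 ^ dd (k + n) / 2 ^ dd k * u (k + n) := by
  induction n generalizing k with
  | zero => simp
  | succ n ih =>
    rw [Function.iterate_succ_apply', TT_apply, ih]
    have : k + 1 + (n:ℤ) = k + ((n + 1 : ℕ) : ℤ) := by push_cast; ring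
    rw [this]
    field_simp

lemma TT_G {n : ℕ} (hn : n ∈ Gset) (u : C₀(ℤ, ℝ)) : |u 0| ≤ ‖TT^[n] u‖ := by
  have h := abs_le_norm (TT^[n] u) (-(n:ℤ))
  rw [TT_iter, neg_add_cancel, dd_zero, dd_neg_G hn] at h
  simpa using h

/-! ### The frequently hypercyclic vector -/

lemma exists_y : ∃ y : ℕ → ℤ → ℝ, (∀ p j, y p j ≠ 0 → |j| ≤ p) ∧ (∀ p j, |y p j| ≤ 2 ^ p) ∧
    ∀ z : ℤ →₀ ℚ, ∀ P : ℕ, ∃ p ≥ P, ∀ j, y p j = z j := by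
  classical
  obtain ⟨e, he⟩ := exists_surjective_nat (ℤ →₀ ℚ)
  refine ⟨fun p j => if (∀ i, e p.unpair.1 i ≠ 0 → |i| ≤ p) ∧
    (∀ i, |((e p.unpair.1 i : ℚ) : ℝ)| ≤ 2 ^ p) then ((e p.unpair.1 j : ℚ) : ℝ) else 0, ?_, ?_, ?_⟩
  · intro p j h
    dsimp only at h
    split_ifs at h with hc
    · exact hc.1 j (by exact_mod_cast h)
    · exact absurd rfl h
  · intro p j
    dsimp only
    split_ifs with hc
    · exact hc.2 j
    · simp
  · intro z P
    obtain ⟨a, rfl⟩ := he z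
    obtain ⟨M, hM⟩ : ∃ M : ℕ, ∀ i ∈ (e a).support, i.natAbs ≤ M :=
      ⟨(e a).support.sup Int.natAbs, fun i hi => Finset.le_sup (f := Int.natAbs) hi⟩
    obtain ⟨M', hM'⟩ : ∃ M' : ℕ, ∀ i ∈ (e a).support, ⌈|((e a i : ℚ) : ℝ)|⌉₊ ≤ M' :=
      ⟨(e a).support.sup (fun i => ⌈|((e a i : ℚ) : ℝ)|⌉₊),
        fun i hi => Finset.le_sup (f := fun i => ⌈|((e a i : ℚ) : ℝ)|⌉₊) hi⟩
    have hle := Nat.right_le_pair a (P + M + M')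
    refine ⟨Nat.pair a (P + M + M'), by omega, fun j => ?_⟩
    set p := Nat.pair a (P + M + M') with hp
    have hu : p.unpair.1 = a := by rw [hp, Nat.unpair_pair]
    simp only [hu]
    rw [if_pos]
    constructor
    · intro i hi
      have := hM i (Finsupp.mem_support_iff.mpr hi)
      rw [Int.abs_eq_natAbs]
      omega
    · intro i
      by_cases hi : e a i = 0
      · simp [hi]
      · have h1 := hM' i (Finsupp.mem_support_iff.mpr hi)
        have h2 : |((e a i : ℚ) : ℝ)| ≤ (M' : ℝ) := (Nat.le_ceil _).trans (by exact_mod_cast h1)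
        have h3 : p < 2 ^ p := Nat.lt_pow_self (by norm_num)
        have h4 : (M' : ℝ) ≤ 2 ^ p := by
          have : M' ≤ 2 ^ p := by omega
          exact_mod_cast this
        exact h2.trans h4

lemma exists_X (y : ℕ → ℤ → ℝ) : ∃ X : ℤ → ℝ,
    (∀ p n : ℕ, ∀ j : ℤ, n ∈ ES p → |j| ≤ p → X (n + j) = y p j) ∧
    (∀ l, X l ≠ 0 → ∃ p n : ℕ, ∃ j : ℤ, n ∈ ES p ∧ |j| ≤ p ∧ l = n + j) := by
  classical
  let C : ℤ → ℝ → Prop := fun l r =>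
    ∃ p n : ℕ, ∃ j : ℤ, n ∈ ES p ∧ |j| ≤ p ∧ l = n + j ∧ r = y p j
  refine ⟨fun l => if h : ∃ r, C l r then h.choose else 0, ?_, ?_⟩
  · intro p n j hn hj
    have h : ∃ r, C (n + j) r := ⟨y p j, p, n, j, hn, hj, rfl, rfl⟩
    simp only [dif_pos h]
    obtain ⟨q, m, i, hm, hi, heq, hr⟩ := h.choose_spec
    rw [hr]
    rw [abs_le] at hi hj
    have hmn : m = n := by
      rcases lt_trichotomy m n with h | h | h
      · have := ES_sep hm hn h
        omega
      · exact h
      · have := ES_sep hn hm h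
        omega
    subst hmn
    have := ES_disj hm hn
    subst this
    have : i = j := by omega
    rw [this]
  · intro l hl
    by_cases h : ∃ r, C l r
    · obtain ⟨q, m, i, hm, hi, heq, hr⟩ := h.choose_spec
      exact ⟨q, m, i, hm, hi, heq⟩
    · simp only [dif_neg h] at hl
      exact absurd rfl hl

lemma exists_fhc : ∃ x : C₀(ℤ, ℝ), FreqHypPt (⇑TT) x := by
  obtain ⟨y, hy1, hy2, hy3⟩ := exists_y
  obtain ⟨X, hX1, hX2⟩ := exists_X y
  have hfin : Tendsto (fun l => X l / 2 ^ dd l) cofinite (𝓝 0) := by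
    apply tendsto_of_finite
    intro ε hε
    obtain ⟨M, hM⟩ := exists_pow_lt_of_lt_one hε (by norm_num : (1/2 : ℝ) < 1)
    refine (Set.finite_Icc (0:ℤ) (2 * M)).subset fun l hl => ?_
    simp only [mem_ofPred_eq] at hl
    have hX : X l ≠ 0 := by
      intro h0
      rw [h0] at hl
      simp at hl
      linarith
    obtain ⟨p, n, j, hn, hj, rfl⟩ := hX2 l hX
    have hlarge := ES_large hn
    have hj' := abs_le.mp hj
    refine ⟨by omega, ?_⟩
    by_contra hcon
    rw [hX1 p n j hn hj, abs_div, abs_of_pos (by positivity : (0:ℝ) < 2 ^ dd (n + j))] at hl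
    have hd : p + M ≤ dd (n + j) := by
      rw [dd_nonneg (by omega)]; omega
    have : |y p j| / 2 ^ dd (n + j) ≤ (1/2) ^ M := by
      rw [div_le_iff₀ (by positivity)]
      calc |y p j| ≤ 2 ^ p := hy2 p j
        _ = (1/2) ^ M * 2 ^ (p + M) := by rw [pow_add, one_div, inv_pow]; field_simp
        _ ≤ _ := by gcongr; norm_num
    linarith
  refine ⟨mkC _ hfin, ?_⟩
  intro V hV hVn
  obtain ⟨v, hv⟩ := hVn
  obtain ⟨ε, hε, hball⟩ := Metric.isOpen_iff.mp hV v hv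
  have hF : {k : ℤ | ε / 3 ≤ |v k|}.Finite := by
    have := (Metric.tendsto_nhds.mp (tendsto_C v)) (ε / 3) (by positivity)
    rw [Filter.eventually_cofinite] at this
    refine this.subset fun k hk => ?_
    simpa using hk
  have hq : ∀ k : ℤ, ∃ q : ℚ, |2 ^ dd k * v k - q| < ε / 3 := fun k =>
    (exists_rat_near _ (by positivity))
  choose q hq using hq
  classical
  let z : ℤ →₀ ℚ := Finsupp.onFinset hF.toFinset (fun k => if k ∈ hF.toFinset then q k else 0)
    (by intro k hk; by_contra h; exact hk (if_neg h))
  obtain ⟨P, hP⟩ := exists_pow_lt_of_lt_one (by positivity : 0 < ε / 3) (by norm_num : (1/2 : ℝ) < 1)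
  obtain ⟨p, hpP, hpz⟩ := hy3 z P
  have hpε : (1/2:ℝ) ^ p < ε / 3 :=
    (pow_le_pow_of_le_one (by norm_num) (by norm_num) hpP).trans_lt hP
  apply density_of_ES (p := p)
  intro m hm
  apply hball
  rw [Metric.mem_ball, dist_eq_norm]
  refine lt_of_le_of_lt (norm_le_of _ (c := 2 * ε / 3) (by positivity) ?_) (by linarith)
  intro i
  have hval : (TT^[m] (mkC _ hfin) - v) i = X (i + m) / 2 ^ dd i - v i := by
    rw [ZeroAtInftyContinuousMap.sub_apply, TT_iter, mkC_apply]
    field_simp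
  rw [hval]
  have hA : |y p i / 2 ^ dd i - v i| ≤ ε / 3 := by
    rw [hpz i]
    by_cases hi : i ∈ hF.toFinset
    · have hzi : z i = q i := by simp [z, Finsupp.onFinset_apply] at hi ⊢; intro h; linarith
      rw [hzi]
      have h1 : (q i : ℝ) / 2 ^ dd i - v i = -(2 ^ dd i * v i - q i) / 2 ^ dd i := by
        field_simp; ring
      rw [h1, abs_div, abs_neg, abs_of_pos (by positivity : (0:ℝ) < 2 ^ dd i)]
      exact (div_le_self (abs_nonneg _) (one_le_pow₀ (by norm_num))).trans (hq i).le
    · have hzi : z i = 0 := by simp [z, Finsupp.onFinset_apply] at hi ⊢; intro h; linarith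
      rw [hzi]
      simp only [Finite.mem_toFinset, mem_ofPred_eq, not_le] at hi
      simpa using hi.le
  have hB : |(X (i + m) - y p i) / 2 ^ dd i| ≤ ε / 3 := by
    by_cases hip : |i| ≤ p
    · have := hX1 p m i hm hip
      rw [add_comm i, this]
      simp; positivity
    · have hyi : y p i = 0 := by
        by_contra h
        exact hip (hy1 p i h)
      rw [hyi, sub_zero]
      by_cases hX : X (i + m) = 0
      · rw [hX]; simp; positivity
      · obtain ⟨q, n, j, hn, hj, heq⟩ := hX2 _ hX
        have hmn : m ≠ n := by
          rintro rfl
          have := ES_disj hm hn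
          subst this
          have : i = j := by omega
          exact hip (this ▸ hj)
        have hd := dd_large hm hn hmn hj
        have hi : (n - m + j : ℤ) = i := by omega
        rw [hi] at hd
        rw [heq, hX1 q n j hn hj, abs_div, abs_of_pos (by positivity : (0:ℝ) < 2 ^ dd i)]
        refine le_trans ?_ hpε.le
        rw [div_le_iff₀ (by positivity)]
        calc |y q j| ≤ 2 ^ q := hy2 q j
          _ = (1/2) ^ p * 2 ^ (p + q) := by rw [pow_add, one_div, inv_pow]; field_simp
          _ ≤ _ := by gcongr; norm_num
  have : X (i + m) / 2 ^ dd i - v i =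
      (X (i + m) - y p i) / 2 ^ dd i + (y p i / 2 ^ dd i - v i) := by ring
  rw [this]
  refine (abs_add_le _ _).trans ?_
  linarith

end FHC
namespace FHC

open Classical in
/-- number of visits before time `N` -/
noncomputable def cnt (A : Set C₀(ℤ, ℝ)) (N : ℕ) (u : C₀(ℤ, ℝ)) : ℕ :=
  ∑ n ∈ Finset.range N, if TT^[n] u ∈ A then 1 else 0

lemma cnt_TT (A : Set C₀(ℤ, ℝ)) (N : ℕ) (u : C₀(ℤ, ℝ)) :
    cnt A N (TT u) ≤ cnt A N u + 1 ∧ cnt A N u ≤ cnt A N (TT u) + 1 := by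
  classical
  have h : cnt A N (TT u) + (if u ∈ A then 1 else 0) =
      cnt A N u + (if TT^[N] u ∈ A then 1 else 0) := by
    unfold cnt
    have h1 := Finset.sum_range_succ (fun n => if TT^[n] u ∈ A then 1 else 0) N
    have h2 := Finset.sum_range_succ' (fun n => if TT^[n] u ∈ A then 1 else 0) N
    simp only [Function.iterate_succ_apply, Function.iterate_zero, id] at h1 h2
    rw [← h1, h2]
    congr!
  split_ifs at h <;> omega

lemma cont_eval : Continuous (fun u : C₀(ℤ, ℝ) => |u 0|) := by
  have : LipschitzWith 1 (fun u : C₀(ℤ, ℝ) => u 0) := by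
    apply LipschitzWith.of_dist_le_mul
    intro u v
    rw [NNReal.coe_one, one_mul, dist_eq_norm, dist_eq_norm]
    exact abs_le_norm (u - v) 0
  exact this.continuous.abs

lemma cnt_lower {R : ℝ} {u : C₀(ℤ, ℝ)} (hu : R < |u 0|) (t : ℕ) :
    16 ^ t ≤ 2 * cnt {w | R ≤ ‖w‖} (4 * 16 ^ t) u := by
  classical
  refine (G_count t).trans ?_
  apply Nat.mul_le_mul_left
  rw [Finset.card_filter]
  unfold cnt
  apply Finset.sum_le_sum
  intro n hn
  by_cases h : n ∈ Gset
  · have : R ≤ ‖TT^[n] u‖ := hu.le.trans (TT_G h u)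
    simp [h, this]
  · simp [h]

variable [MeasurableSpace C₀(ℤ, ℝ)] [BorelSpace C₀(ℤ, ℝ)]

lemma cnt_meas {A : Set C₀(ℤ, ℝ)} (hA : MeasurableSet A) (N : ℕ) : Measurable (cnt A N) := by
  classical
  unfold cnt
  apply Finset.measurable_sum
  intro n _
  exact Measurable.ite ((TT.continuous.measurable.iterate n) hA) measurable_const measurable_const

lemma cnt_int {A : Set C₀(ℤ, ℝ)} (hA : MeasurableSet A) (N : ℕ) {μ : Measure C₀(ℤ, ℝ)}
    (h : MeasurePreserving (⇑TT) μ μ) : ∫⁻ u, (cnt A N u : ENNReal) ∂μ = N * μ A := by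
  classical
  have h1 : ∀ u, (cnt A N u : ENNReal) =
      ∑ n ∈ Finset.range N, (TT^[n] ⁻¹' A).indicator 1 u := by
    intro u
    unfold cnt
    push_cast
    apply Finset.sum_congr rfl
    intro n _
    simp [Set.indicator_apply]
  have hm : ∀ n, MeasurableSet (TT^[n] ⁻¹' A) := fun n =>
    (TT.continuous.measurable.iterate n) hA
  simp_rw [h1]
  rw [lintegral_finsetSum _ (fun n _ => measurable_one.indicator (hm n))]
  have : ∀ n, ∫⁻ u, (TT^[n] ⁻¹' A).indicator 1 u ∂μ = μ A := by
    intro n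
    rw [lintegral_indicator_one (hm n), (h.iterate n).measure_preimage hA.nullMeasurableSet]
  simp [this]

lemma meas_lower {μ : Measure C₀(ℤ, ℝ)} [IsProbabilityMeasure μ] (he : Ergodic (⇑TT) μ)
    (hs : ∀ U : Set C₀(ℤ, ℝ), IsOpen U → U.Nonempty → 0 < μ U) (R : ℝ) :
    1 / 2 ≤ 16 * μ {w | R ≤ ‖w‖} := by
  set A : Set C₀(ℤ, ℝ) := {w | R ≤ ‖w‖} with hAdef
  have hA : MeasurableSet A := (isClosed_le continuous_const continuous_norm).measurableSet
  let B : ℕ → Set C₀(ℤ, ℝ) := fun j => {u | ∀ t ≥ j, 16 ^ t ≤ 2 * cnt A (4 * 16 ^ t) u + j}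
  have hBm : ∀ j, MeasurableSet (B j) := by
    intro j
    have : B j = ⋂ t, ⋂ (_ : t ≥ j), {u | 16 ^ t ≤ 2 * cnt A (4 * 16 ^ t) u + j} := by
      ext u; simp [B]
    rw [this]
    refine MeasurableSet.iInter fun t => MeasurableSet.iInter fun _ => ?_
    exact measurableSet_le measurable_const (((cnt_meas hA _).const_mul 2).add_const j)
  have hBmono : Monotone B := by
    intro i j hij u hu t ht
    exact (hu t (hij.trans ht)).trans (by omega)
  have hinv : TT ⁻¹' (⋃ j, B j) = ⋃ j, B j := by
    ext u
    simp only [mem_preimage, mem_iUnion]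
    constructor
    · rintro ⟨j, hj⟩
      refine ⟨j + 2, fun t ht => ?_⟩
      have h1 := hj t (by omega)
      have h2 := (cnt_TT A (4 * 16 ^ t) u).1
      omega
    · rintro ⟨j, hj⟩
      refine ⟨j + 2, fun t ht => ?_⟩
      have h1 := hj t (by omega)
      have h2 := (cnt_TT A (4 * 16 ^ t) u).2
      omega
  have hone : μ (⋃ j, B j) = 1 := by
    rcases he.toPreErgodic.prob_eq_zero_or_one (MeasurableSet.iUnion hBm) hinv with h | h
    · exfalso
      have hopen : IsOpen {u : C₀(ℤ, ℝ) | R < |u 0|} := isOpen_lt continuous_const cont_eval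
      have hne : {u : C₀(ℤ, ℝ) | R < |u 0|}.Nonempty := by
        classical
        refine ⟨mkC (fun k => if k = 0 then |R| + 1 else 0) ?_, ?_⟩
        · apply tendsto_of_finite
          intro ε hε
          refine (Set.finite_singleton (0:ℤ)).subset fun l hl => ?_
          by_contra hl0
          have : l ≠ 0 := hl0
          simp [this] at hl
          linarith
        · simp only [mem_ofPred_eq, mkC_apply, if_true]
          rw [abs_of_pos (by positivity)]
          linarith [le_abs_self R]
      have hsub : {u : C₀(ℤ, ℝ) | R < |u 0|} ⊆ ⋃ j, B j := by
        intro u hu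
        exact mem_iUnion.mpr ⟨0, fun t _ => (cnt_lower hu t).trans (Nat.le_add_right _ 0)⟩
      exact (hs _ hopen hne).ne' (measure_mono_null hsub h)
    · exact h
  have hlim := tendsto_measure_iUnion_atTop (μ := μ) hBmono
  rw [hone] at hlim
  have hhalf : (1 / 2 : ENNReal) < 1 := by
    rw [one_div]; exact ENNReal.one_half_lt_one
  obtain ⟨j, hj⟩ := (hlim.eventually (lt_mem_nhds hhalf)).exists
  have hj : (1 / 2 : ENNReal) < μ (B j) := hj
  -- choose t
  set t := 2 * j with ht
  have hjt : 2 * j ≤ 16 ^ t := (Nat.lt_pow_self (by norm_num)).le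
  have hsub : B j ⊆ {u | ((16 ^ t : ℕ) : ENNReal) ≤ ((4 * cnt A (4 * 16 ^ t) u : ℕ) : ENNReal)} := by
    intro u hu
    have := hu t (by omega)
    simp only [mem_ofPred_eq]
    exact_mod_cast (by omega : 16 ^ t ≤ 4 * cnt A (4 * 16 ^ t) u)
  have hmark := mul_meas_ge_le_lintegral (μ := μ)
    (f := fun u => ((4 * cnt A (4 * 16 ^ t) u : ℕ) : ENNReal))
    (measurable_from_top.comp ((cnt_meas hA (4 * 16 ^ t)).const_mul 4)) ((16 ^ t : ℕ) : ENNReal)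
  have h_integral : ∫⁻ u, ((4 * cnt A (4 * 16 ^ t) u : ℕ) : ENNReal) ∂μ =
      ((16 ^ t : ℕ) : ENNReal) * (16 * μ A) := by
    have hmm : Measurable (fun u => (cnt A (4 * 16 ^ t) u : ENNReal)) :=
      measurable_from_top.comp (cnt_meas hA (4 * 16 ^ t))
    simp_rw [Nat.cast_mul 4]
    rw [lintegral_const_mul _ hmm,
      cnt_int hA _ he.toMeasurePreserving]
    push_cast
    ring
  rw [h_integral] at hmark
  have h0 : ((16 ^ t : ℕ) : ENNReal) ≠ 0 := by
    have : 16 ^ t ≠ 0 := by positivity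
    exact_mod_cast this
  have h2 := (ENNReal.mul_le_mul_iff_right h0 (ENNReal.natCast_ne_top _)).mp hmark
  exact hj.le.trans ((measure_mono hsub).trans h2)

lemma no_ergodic {μ : Measure C₀(ℤ, ℝ)} [IsProbabilityMeasure μ] (he : Ergodic (⇑TT) μ)
    (hs : ∀ U : Set C₀(ℤ, ℝ), IsOpen U → U.Nonempty → 0 < μ U) : False := by
  have hm : ∀ R : ℝ, MeasurableSet {w : C₀(ℤ, ℝ) | R ≤ ‖w‖} := fun R =>
    (isClosed_le continuous_const continuous_norm).measurableSet
  have hanti : Antitone (fun n : ℕ => {w : C₀(ℤ, ℝ) | (n : ℝ) ≤ ‖w‖}) := by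
    intro a b hab w hw
    have : (a : ℝ) ≤ b := by exact_mod_cast hab
    exact this.trans hw
  have hlim := tendsto_measure_iInter_atTop (μ := μ)
    (fun n : ℕ => (hm n).nullMeasurableSet) hanti ⟨0, measure_ne_top _ _⟩
  have hempty : (⋂ n : ℕ, {w : C₀(ℤ, ℝ) | (n : ℝ) ≤ ‖w‖}) = ∅ := by
    rw [eq_empty_iff_forall_notMem]
    intro w hw
    rw [mem_iInter] at hw
    obtain ⟨n, hn⟩ := exists_nat_gt ‖w‖
    exact absurd (hw n) (not_le.mpr hn)
  rw [hempty, measure_empty] at hlim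
  have h2 := ENNReal.Tendsto.const_mul (a := 16) hlim (Or.inr (by norm_num))
  rw [mul_zero] at h2
  have h3 : (1 / 2 : ENNReal) ≤ 0 := ge_of_tendsto' h2 (fun n => meas_lower he hs n)
  simp at h3

end FHC

/-- There exists a bounded linear operator `T` on the Banach space
`c₀(ℤ)` of two-sided real sequences vanishing at infinity (with the sup norm), here
realized as `C₀(ℤ, ℝ)`, which is frequently hypercyclic but admits no ergodic
`T`-invariant Borel probability measure with full support. -/
theorem stmt3 :
    letI : MeasurableSpace C₀(ℤ, ℝ) := borel C₀(ℤ, ℝ)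
    ∃ T : C₀(ℤ, ℝ) →L[ℝ] C₀(ℤ, ℝ),
      (∃ x : C₀(ℤ, ℝ), FreqHypPt (⇑T) x) ∧
      ¬ ∃ μ : Measure C₀(ℤ, ℝ), IsProbabilityMeasure μ ∧ Ergodic (⇑T) μ ∧
          ∀ U : Set C₀(ℤ, ℝ), IsOpen U → U.Nonempty → 0 < μ U := by
  letI : MeasurableSpace C₀(ℤ, ℝ) := borel C₀(ℤ, ℝ)
  haveI : BorelSpace C₀(ℤ, ℝ) := ⟨rfl⟩
  refine ⟨FHC.TT, FHC.exists_fhc, ?_⟩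
  rintro ⟨μ, hp, he, hs⟩
  exact FHC.no_ergodic he hs
end

section
/- Let X be a separable Banach space and let T : X → X be a hypercyclic bounded linear operator. If T admits an ergodic T-invariant Borel probability measure with full support, then c(T) = 1. -/
open MeasureTheory Filter Topology Set Metric

/-- The upper density of a set of natural numbers:
`limsup_{N→∞} #(A ∩ [1,N]) / N`. -/
noncomputable def upperDensity (A : Set ℕ) : ℝ :=
  Filter.limsup (fun N : ℕ => (Nat.card ↥(A ∩ Set.Icc 1 N) : ℝ) / N) Filter.atTop

/-- `x` is a hypercyclic point for `T`: its orbit is dense. -/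
def HypPt {X : Type*} [TopologicalSpace X] (T : X → X) (x : X) : Prop :=
  Dense (Set.range fun n : ℕ => T^[n] x)

/-- The parameter `c(T)`:
`c(T) = sup_{R>0} sup_{x ∈ HC(T)} upperDensity {n | T^[n] x ∈ B̄(0,R)}`. -/
noncomputable def cConst {X : Type*} [NormedAddCommGroup X] (T : X → X) : ℝ :=
  sSup {c : ℝ | ∃ R : ℝ, 0 < R ∧ ∃ x : X, HypPt T x ∧
    c = upperDensity {n : ℕ | T^[n] x ∈ Metric.closedBall 0 R}}

open Classical in
lemma card_eq_sum (A : Set ℕ) (N : ℕ) :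
    (Nat.card ↥(A ∩ Set.Icc 1 N)) = ∑ n ∈ Finset.Icc 1 N, if n ∈ A then 1 else 0 := by
  have : A ∩ Set.Icc 1 N = ↑((Finset.Icc 1 N).filter (fun n => n ∈ A)) := by
    ext n
    simp only [Set.mem_inter_iff, Set.mem_Icc, Finset.coe_filter, Finset.mem_Icc, Set.mem_ofPred_eq]
    tauto
  rw [this, Nat.card_coe_set_eq, Set.ncard_coe_finset, Finset.card_filter]

lemma freq_le_one (A : Set ℕ) (N : ℕ) :
    (Nat.card ↥(A ∩ Set.Icc 1 N) : ℝ) / N ≤ 1 := by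
  apply div_le_one_of_le₀ _ (Nat.cast_nonneg N)
  have h : Nat.card ↥(A ∩ Set.Icc 1 N) ≤ N := by
    rw [Nat.card_coe_set_eq]
    calc _ ≤ (Set.Icc 1 N).ncard := Set.ncard_le_ncard Set.inter_subset_right (Set.finite_Icc _ _)
      _ = N := by simp [Set.ncard_eq_toFinset_card']
  exact_mod_cast h

lemma freq_bdd (A : Set ℕ) : IsBoundedUnder (· ≤ ·) atTop
    (fun N : ℕ => (Nat.card ↥(A ∩ Set.Icc 1 N) : ℝ) / N) :=
  isBoundedUnder_of ⟨1, freq_le_one A⟩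

lemma freq_cobdd (A : Set ℕ) : IsCoboundedUnder (· ≤ ·) atTop
    (fun N : ℕ => (Nat.card ↥(A ∩ Set.Icc 1 N) : ℝ) / N) :=
  IsBoundedUnder.isCoboundedUnder_le (isBoundedUnder_of ⟨0, fun _ => by positivity⟩)

lemma upperDensity_le_one (A : Set ℕ) : upperDensity A ≤ 1 :=
  limsup_le_of_le (freq_cobdd A) (Eventually.of_forall (freq_le_one A))

lemma ae_hyp {X : Type*} [TopologicalSpace X] [SecondCountableTopology X]
    [MeasurableSpace X] [BorelSpace X] (T : X → X) (μ : Measure X) [IsProbabilityMeasure μ]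
    (hc : Continuous T)
    (he : Ergodic T μ) (hU : ∀ U : Set X, IsOpen U → U.Nonempty → 0 < μ U) :
    ∀ᵐ x ∂μ, HypPt T x := by
  obtain ⟨b, hbc, hbe, hb⟩ := TopologicalSpace.exists_countable_basis X
  have key : ∀ U ∈ b, ∀ᵐ x ∂μ, ∃ n : ℕ, T^[n] x ∈ U := by
    intro U hUb
    have hUo := hb.isOpen hUb
    have hne : U.Nonempty := Set.nonempty_iff_ne_empty.2 fun h => hbe (h ▸ hUb)
    set E : Set X := ⋃ n : ℕ, T^[n] ⁻¹' U with hE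
    have hEo : IsOpen E := isOpen_iUnion fun n => hUo.preimage (hc.iterate n)
    have hsub : T ⁻¹' E ⊆ E := by
      intro x hx
      simp only [hE, Set.mem_preimage, Set.mem_iUnion] at hx ⊢
      obtain ⟨n, hn⟩ := hx
      exact ⟨n + 1, by simpa [Function.iterate_succ_apply] using hn⟩
    have hUE : U ⊆ E := Set.subset_iUnion (fun n : ℕ => T^[n] ⁻¹' U) 0
    have hor := he.ae_empty_or_univ_of_preimage_ae_le hEo.measurableSet.nullMeasurableSet
      (HasSubset.Subset.eventuallyLE hsub)
    rcases hor with h | h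
    · have h0 : μ E = 0 := by simpa using measure_congr h
      exact absurd (measure_mono_null hUE h0) (hU U hUo hne).ne'
    · filter_upwards [eventuallyEq_univ.1 h] with x hx
      simpa [hE] using hx
  have := (ae_ball_iff hbc).2 key
  filter_upwards [this] with x hx
  rw [HypPt, hb.dense_iff]
  intro U hUb _
  obtain ⟨n, hn⟩ := hx U hUb
  exact ⟨_, hn, n, rfl⟩

lemma freq_int {X : Type*} [MeasurableSpace X] (T : X → X) (μ : Measure X)
    [IsProbabilityMeasure μ] (he : MeasurePreserving T μ μ) {B : Set X} (hB : MeasurableSet B)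
    {c : ℝ} (hc0 : 0 ≤ c) (h : ∀ᵐ x ∂μ, upperDensity {n : ℕ | T^[n] x ∈ B} < c) :
    μ B ≤ ENNReal.ofReal c := by
  classical
  set F : ℕ → X → ENNReal := fun N x =>
    ENNReal.ofReal ((Nat.card ↥({n : ℕ | T^[n] x ∈ B} ∩ Set.Icc 1 N) : ℝ) / N) with hF
  have hF' : ∀ N : ℕ, 0 < N → F N =
      fun x => (∑ n ∈ Finset.Icc 1 N, (T^[n] ⁻¹' B).indicator 1 x) / (N : ENNReal) := by
    intro N hN
    funext x
    simp only [hF]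
    rw [ENNReal.ofReal_div_of_pos (by exact_mod_cast hN), ENNReal.ofReal_natCast,
      ENNReal.ofReal_natCast, card_eq_sum]
    push_cast
    rfl
  have hmB : ∀ n, MeasurableSet (T^[n] ⁻¹' B) := fun n => (he.iterate n).measurable hB
  have hmeas : ∀ N, Measurable (F N) := by
    intro N
    rcases Nat.eq_zero_or_pos N with rfl | hN
    · simp [hF]
    · rw [hF' N hN]
      exact (Finset.measurable_sum _ fun n _ => measurable_one.indicator (hmB n)).div_const _
  have hint : ∀ N, 0 < N → ∫⁻ x, F N x ∂μ = μ B := by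
    intro N hN
    rw [hF' N hN]
    simp only [div_eq_mul_inv]
    rw [lintegral_mul_const _ (Finset.measurable_sum _ fun n _ =>
      measurable_one.indicator (hmB n)),
      lintegral_finsetSum _ (fun n _ => measurable_one.indicator (hmB n))]
    simp only [lintegral_indicator_one (hmB _),
      (he.iterate _).measure_preimage hB.nullMeasurableSet]
    simp only [Finset.sum_const, Nat.card_Icc, Nat.add_sub_cancel, nsmul_eq_mul]
    rw [mul_comm, ← mul_assoc, ENNReal.inv_mul_cancel (by exact_mod_cast hN.ne') (by simp),
      one_mul]
  have h1 : limsup (fun N => ∫⁻ x, F N x ∂μ) atTop ≤ ∫⁻ x, limsup (fun N => F N x) atTop ∂μ := by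
    apply limsup_lintegral_le (fun _ => 1) hmeas
    · intro N
      exact Eventually.of_forall fun x => ENNReal.ofReal_le_one.2 (freq_le_one _ _)
    · simp
  have h2 : limsup (fun N => ∫⁻ x, F N x ∂μ) atTop = μ B := by
    rw [limsup_congr (v := fun _ => μ B)]
    · simp
    · filter_upwards [eventually_gt_atTop 0] with N hN using hint N hN
  have h3 : ∫⁻ x, limsup (fun N => F N x) atTop ∂μ ≤ ∫⁻ x, ENNReal.ofReal c ∂μ := by
    apply lintegral_mono_ae
    filter_upwards [h] with x hx
    apply limsup_le_of_le
    · isBoundedDefault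
    · filter_upwards [eventually_lt_of_limsup_lt hx (freq_bdd _)] with N hN
      exact ENNReal.ofReal_le_ofReal hN.le
  rw [h2] at h1
  simpa using h1.trans h3

/-- Let `X` be a separable Banach space and `T` a hypercyclic bounded
linear operator on `X`. If `T` admits an ergodic invariant Borel probability measure
with full support, then `c(T) = 1`. -/
theorem stmt4 {X : Type*} [NormedAddCommGroup X] [NormedSpace ℝ X] [CompleteSpace X]
    [TopologicalSpace.SeparableSpace X] [MeasurableSpace X] [BorelSpace X]
    (T : X →L[ℝ] X) (hhc : ∃ x : X, HypPt (⇑T) x)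
    (herg : ∃ μ : Measure X, IsProbabilityMeasure μ ∧ Ergodic (⇑T) μ ∧
      ∀ U : Set X, IsOpen U → U.Nonempty → 0 < μ U) :
    cConst (⇑T) = 1 := by
  obtain ⟨μ, hμ, he, hU⟩ := herg
  haveI : SecondCountableTopology X := UniformSpace.secondCountable_of_separable X
  have hae := ae_hyp T μ T.continuous he hU
  obtain ⟨x₀, hx₀⟩ := hhc
  apply csSup_eq_of_forall_le_of_forall_lt_exists_gt
  · exact ⟨_, 1, one_pos, x₀, hx₀, rfl⟩
  · rintro _ ⟨R, hR, x, hx, rfl⟩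
    exact upperDensity_le_one _
  · intro w hw
    obtain ⟨c, hwc, hc1⟩ := exists_between (max_lt hw one_pos)
    have hwc' := (max_lt_iff.1 hwc)
    have hlim : Tendsto (fun n : ℕ => μ (closedBall (0 : X) n)) atTop (𝓝 1) := by
      have := tendsto_measure_iUnion_atTop (μ := μ) (s := fun n : ℕ => closedBall (0 : X) n)
        (fun a b hab => closedBall_subset_closedBall (by exact_mod_cast hab))
      rwa [iUnion_closedBall_nat, measure_univ] at this
    have hc1' : ENNReal.ofReal c < 1 := by
      rw [← ENNReal.ofReal_one]
      exact (ENNReal.ofReal_lt_ofReal_iff one_pos).2 hc1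
    obtain ⟨n, hn, hn0⟩ := ((hlim.eventually (lt_mem_nhds hc1')).and
      (eventually_gt_atTop 0)).exists
    by_contra hcon
    push Not at hcon
    refine absurd (freq_int T μ he.toMeasurePreserving
      (B := closedBall (0 : X) n) measurableSet_closedBall hwc'.2.le ?_) (not_le.2 hn)
    filter_upwards [hae] with x hx
    exact (hcon _ ⟨n, by exact_mod_cast hn0, x, hx, rfl⟩).trans_lt hwc'.1
end

section
/- Let X be a Hausdorff topological space, let T : X → X be a continuous map, and let a ∈ X. Suppose there exist x ∈ X and a set D ⊆ ℕ with positive upper density such that T^i x → a as i → ∞ along D. Then a is a periodic point of T, i.e. T^q a = a for some q ≥ 1. -/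
open Filter Topology Set

theorem card_bound_aux (D : Set ℕ) (k N0 : ℕ) (hk : 0 < k)
    (h : ∀ i ∈ D, N0 ≤ i → ∀ q, 1 ≤ q → q < k → i + q ∉ D) (N : ℕ) :
    Nat.card ↥(D ∩ Set.Icc 1 N) ≤ N0 + (N / k + 1) := by
  classical
  have hfin : (D ∩ Set.Icc 1 N).Finite := (Set.finite_Icc 1 N).inter_of_right D
  have hsub : hfin.toFinset ⊆ Finset.range N0 ∪ hfin.toFinset.filter (fun i => N0 ≤ i) := by
    intro i hi
    simp only [Finset.mem_union, Finset.mem_range, Finset.mem_filter]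
    by_cases h' : i < N0
    · exact Or.inl h'
    · exact Or.inr ⟨hi, by omega⟩
  have hB : (hfin.toFinset.filter (fun i => N0 ≤ i)).card ≤ (Finset.range (N / k + 1)).card := by
    apply Finset.card_le_card_of_injOn (fun i => i / k)
    · intro i hi
      simp at hi
      simp only [Finset.coe_range, Set.mem_Iio]
      exact Nat.lt_succ_of_le (Nat.div_le_div_right hi.1.2.2)
    · have key : ∀ i j : ℕ, i ∈ D → j ∈ D → N0 ≤ i → i / k = j / k → i < j → False := by
        intro i j hi hj h0 he hlt
        have h1 := Nat.div_add_mod i k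
        have h2 := Nat.div_add_mod j k
        have h3 := Nat.mod_lt j hk
        rw [he] at h1
        refine h i hi h0 (j - i) (by omega) (by omega) ?_
        rwa [show i + (j - i) = j by omega]
      intro i hi j hj he
      simp at hi hj he
      rcases lt_trichotomy i j with hl | hl | hl
      · exact (key i j hi.1.1 hj.1.1 hi.2 he hl).elim
      · exact hl
      · exact (key j i hj.1.1 hi.1.1 hj.2 he.symm hl).elim
  rw [Nat.card_coe_set_eq, Set.ncard_eq_toFinset_card _ hfin]
  have h1 := Finset.card_le_card hsub
  have h2 := Finset.card_union_le (Finset.range N0) (hfin.toFinset.filter (fun i => N0 ≤ i))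
  simp only [Finset.card_range] at *
  omega

theorem exists_shift_aux (D : Set ℕ) (hD : 0 < upperDensity D) :
    ∃ q : ℕ, 1 ≤ q ∧ ∃ᶠ i in atTop, i ∈ D ∧ i + q ∈ D := by
  by_contra! hcon
  obtain ⟨c, hc⟩ : ∃ c, c = upperDensity D := ⟨_, rfl⟩
  rw [← hc] at hD
  obtain ⟨k, hk⟩ := exists_nat_gt (4 / c)
  have hk0 : (0 : ℝ) < k := lt_trans (by positivity) hk
  have hk0' : 0 < k := by exact_mod_cast hk0
  have hev : ∀ᶠ i in atTop, ∀ q ∈ Finset.range k, 1 ≤ q → ¬ (i ∈ D ∧ i + q ∈ D) := by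
    rw [Filter.eventually_all_finset]
    intro q _
    by_cases hq : 1 ≤ q
    · have := hcon q hq
      filter_upwards [this] with i hi _ h2
      exact hi h2.1 h2.2
    · exact Eventually.of_forall fun i h => absurd h hq
  obtain ⟨N0, hN0⟩ := eventually_atTop.1 hev
  have hb := card_bound_aux D k N0 hk0' (fun i hi h0 q h1 h2 h3 =>
    hN0 i h0 q (Finset.mem_range.2 h2) h1 ⟨hi, h3⟩)
  obtain ⟨M, hM⟩ := exists_nat_gt (4 * ((N0 : ℝ) + 1) / c)
  have hle : upperDensity D ≤ c / 2 := by
    unfold upperDensity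
    refine Filter.limsup_le_of_le ?_ ?_
    · refine Filter.IsCoboundedUnder.of_frequently_ge (a := 0) ?_
      exact (Eventually.of_forall fun N => by positivity).frequently
    · filter_upwards [eventually_ge_atTop M, eventually_gt_atTop 0] with N hN hNp
      have hNp' : (0 : ℝ) < N := by exact_mod_cast hNp
      rw [div_le_iff₀ hNp']
      have h1 : (Nat.card ↥(D ∩ Set.Icc 1 N) : ℝ) ≤ N0 + (((N / k : ℕ) : ℝ) + 1) := by
        exact_mod_cast hb N
      have h2 : ((N / k : ℕ) : ℝ) ≤ N / k := Nat.cast_div_le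
      have h3 : (N : ℝ) / k ≤ c / 4 * N := by
        rw [div_le_iff₀ hk0]
        rw [div_lt_iff₀ hD] at hk
        nlinarith
      have h4 : (M : ℝ) ≤ N := by exact_mod_cast hN
      rw [div_lt_iff₀ hD] at hM
      nlinarith
  rw [← hc] at hle
  linarith

/-- Let `X` be a Hausdorff topological space, `T : X → X` continuous,
and `a ∈ X`. If there exist `x ∈ X` and a set `D ⊆ ℕ` of positive upper density such
that `T^i x → a` as `i → ∞` along `D`, then `a` is a periodic point of `T`. -/
theorem stmt9 {X : Type*} [TopologicalSpace X] [T2Space X]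
    (T : X → X) (hT : Continuous T) (a : X)
    (x : X) (D : Set ℕ) (hD : 0 < upperDensity D)
    (hconv : Filter.Tendsto (fun i : ℕ => T^[i] x)
      (Filter.atTop ⊓ Filter.principal D) (nhds a)) :
    ∃ q : ℕ, 1 ≤ q ∧ T^[q] a = a := by
  obtain ⟨q, hq, hf⟩ := exists_shift_aux D hD
  refine ⟨q, hq, ?_⟩
  have hne : (atTop ⊓ 𝓟 {i : ℕ | i ∈ D ∧ i + q ∈ D}).NeBot :=
    Filter.frequently_mem_iff_neBot.1 hf
  have h1 : Tendsto (fun i : ℕ => T^[i] x) (atTop ⊓ 𝓟 {i : ℕ | i ∈ D ∧ i + q ∈ D}) (𝓝 a) :=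
    hconv.mono_left (inf_le_inf_left _ (principal_mono.2 fun i hi => hi.1))
  have h2 : Tendsto (fun i : ℕ => T^[i + q] x)
      (atTop ⊓ 𝓟 {i : ℕ | i ∈ D ∧ i + q ∈ D}) (𝓝 a) := by
    refine hconv.comp (f := fun i : ℕ => i + q) (tendsto_inf.2 ⟨?_, ?_⟩)
    · exact (tendsto_add_atTop_nat q).mono_left inf_le_left
    · refine tendsto_principal.2 ?_
      exact Filter.mem_inf_of_right (fun i hi => hi.2)
  have h3 := ((hT.iterate q).tendsto a).comp h1
  refine tendsto_nhds_unique h3 (h2.congr fun i => ?_)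
  simp only [Function.comp]
  rw [add_comm, Function.iterate_add_apply]
end

section
/- Let X be a Polish space and T : X → X a continuous map. Then the set P_{T,*}(X) of T-invariant Borel probability measures on X with full support is a G_δ subset of P_T(X); moreover, if P_{T,*}(X) is nonempty, then it is a dense G_δ subset of P_T(X). -/
open MeasureTheory Filter Topology Set

/-- The set `P_T(X)` of `T`-invariant Borel probability measures on `X`, inside the
space `P(X)` of Borel probability measures with the topology of weak convergence. -/
def invariantProbMeasures {X : Type*} [TopologicalSpace X] [MeasurableSpace X]
    (T : X → X) : Set (ProbabilityMeasure X) :=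
  {ν | (ν : Measure X).map T = ν}

lemma isOpen_pos_measure {X : Type*} [TopologicalSpace X] [PolishSpace X]
    [MeasurableSpace X] [BorelSpace X] (U : Set X) (hU : IsOpen U) :
    IsOpen {μ : ProbabilityMeasure X | 0 < (μ : Measure X) U} := by
  rw [isOpen_iff_eventually]
  intro μ hμ
  have h := ProbabilityMeasure.le_liminf_measure_open_of_tendsto
    (tendsto_id (α := ProbabilityMeasure X) (x := 𝓝 μ)) hU
  exact eventually_lt_of_lt_liminf (lt_of_lt_of_le hμ h)

/-- Let `X` be a Polish space and `T : X → X` a continuous map. The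
set `P_{T,*}(X)` of `T`-invariant Borel probability measures with full support is a
`G_δ` subset of `P_T(X)`; moreover, if it is nonempty, it is a dense `G_δ` subset of
`P_T(X)`. -/
theorem stmt10 {X : Type*} [TopologicalSpace X] [PolishSpace X]
    [MeasurableSpace X] [BorelSpace X]
    (T : X → X) (hT : Continuous T) :
    IsGδ {μ : ↥(invariantProbMeasures T) |
        ∀ U : Set X, IsOpen U → U.Nonempty → 0 < (↑μ.1 : Measure X) U} ∧
      ({μ : ↥(invariantProbMeasures T) |
          ∀ U : Set X, IsOpen U → U.Nonempty → 0 < (↑μ.1 : Measure X) U}.Nonempty →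
        Dense {μ : ↥(invariantProbMeasures T) |
          ∀ U : Set X, IsOpen U → U.Nonempty → 0 < (↑μ.1 : Measure X) U}) := by
  constructor
  · obtain ⟨B, hBc, hBe, hB⟩ := TopologicalSpace.exists_countable_basis X
    have : {μ : ↥(invariantProbMeasures T) |
        ∀ U : Set X, IsOpen U → U.Nonempty → 0 < (↑μ.1 : Measure X) U} =
        ⋂ V ∈ B, {μ : ↥(invariantProbMeasures T) | 0 < (↑μ.1 : Measure X) V} := by
      ext μ
      simp only [mem_setOf_eq, mem_iInter]
      constructor
      · intro h V hV
        refine h V (hB.isOpen hV) ?_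
        rw [nonempty_iff_ne_empty]
        rintro rfl
        exact hBe hV
      · rintro h U hU ⟨x, hx⟩
        obtain ⟨V, hV, -, hVU⟩ := hB.exists_subset_of_mem_open hx hU
        exact (h V hV).trans_le (measure_mono hVU)
    rw [this]
    refine IsGδ.biInter hBc fun V hV => IsOpen.isGδ ?_
    exact (isOpen_pos_measure V (hB.isOpen hV)).preimage continuous_subtype_val
  · rintro ⟨m, hm⟩ μ
    have hTm : Measurable T := hT.measurable
    let t : ℕ → ENNReal := fun n => ((n + 1 : ℕ) : ENNReal)⁻¹
    have ht1 : ∀ n, t n ≤ 1 := fun n => by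
      simp only [t]
      rw [ENNReal.inv_le_one]
      exact_mod_cast Nat.succ_pos n
    have ht0 : ∀ n, 0 < t n := fun n => ENNReal.inv_pos.2 (ENNReal.natCast_ne_top _)
    have htl : Tendsto t atTop (𝓝 0) :=
      ENNReal.tendsto_inv_nat_nhds_zero.comp (tendsto_add_atTop_nat 1)
    let ν' : ℕ → Measure X := fun n =>
      (1 - t n) • (μ.1 : Measure X) + t n • (m.1 : Measure X)
    have hν' : ∀ n, IsProbabilityMeasure (ν' n) := fun n => ⟨by
      simp [ν', tsub_add_cancel_of_le (ht1 n)]⟩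
    let ν : ℕ → ↥(invariantProbMeasures T) := fun n => ⟨⟨ν' n, hν' n⟩, by
      have h1 : (μ.1 : Measure X).map T = μ.1 := μ.2
      have h2 : (m.1 : Measure X).map T = m.1 := m.2
      change (ν' n).map T = ν' n
      simp only [ν']
      rw [Measure.map_add _ _ hTm, Measure.map_smul, Measure.map_smul, h1, h2]⟩
    refine mem_closure_of_tendsto (f := ν) (b := atTop) ?_ (Eventually.of_forall ?_)
    · rw [tendsto_subtype_rng, ProbabilityMeasure.tendsto_iff_forall_lintegral_tendsto]
      intro f
      change Tendsto (fun n => ∫⁻ x, f x ∂(ν' n)) atTop _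
      simp only [ν', lintegral_add_measure, lintegral_smul_measure, smul_eq_mul]
      have hfin : ∀ κ : ProbabilityMeasure X, ∫⁻ x, f x ∂(κ : Measure X) ≠ ⊤ := fun κ =>
        (f.lintegral_lt_top_of_nnreal _).ne
      have hs : Tendsto (fun n => 1 - t n) atTop (𝓝 1) := by
        simpa using ENNReal.Tendsto.sub (tendsto_const_nhds (x := (1 : ENNReal))) htl
          (Or.inl ENNReal.one_ne_top)
      have := (ENNReal.Tendsto.mul_const hs (Or.inr (hfin μ.1))).add
        (ENNReal.Tendsto.mul_const htl (Or.inr (hfin m.1)))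
      simpa using this
    · intro n U hU hne
      change 0 < ν' n U
      have h := hm U hU hne
      have : 0 < t n * (m.1 : Measure X) U := ENNReal.mul_pos (ht0 n).ne' h.ne'
      refine this.trans_le ?_
      simp [ν']
end

section
/- Let X be a separable Banach space, T : X → X a bounded linear operator, M ⊆ P_T(X) an adequate family of T-invariant measures, and p ∈ (0,∞). Assume there exists a finite constant C such that for every backward T-invariant nonempty open set Ω ⊆ X, one can find μ ∈ M with μ(Ω) = 1 and ∫_X ‖x‖^p dμ(x) ≤ C. Then there exists a measure m in the closure of M in P(X) such that m(HC(T)) = 1 and ∫_X ‖x‖^p dm(x) < ∞; in particular, T admits an ergodic T-invariant Borel probability measure μ with full support such that ∫_X ‖x‖^p dμ(x) < ∞. -/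
open MeasureTheory Filter Topology Set
/-- A nonempty family `M` of `T`-invariant Borel probability measures is *adequate* if
it is dilation-invariant, convolution-invariant, and every `μ ∈ M` has compact
support. -/
structure AdequateFamily {X : Type*} [TopologicalSpace X] [MeasurableSpace X]
    [AddCommGroup X] [Module ℝ X] (T : X → X) (M : Set (ProbabilityMeasure X)) :
    Prop where
  nonempty : M.Nonempty
  invariant : ∀ μ ∈ M, (↑μ : Measure X).map T = ↑μ
  dilation : ∀ μ ∈ M, ∀ r : ℝ, 0 < r →
    ∃ ν ∈ M, (↑ν : Measure X) = (↑μ : Measure X).map (fun x : X => r⁻¹ • x)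
  convolution : ∀ μ₁ ∈ M, ∀ μ₂ ∈ M, ∃ ν ∈ M,
    (↑ν : Measure X) =
      ((↑μ₁ : Measure X).prod (↑μ₂ : Measure X)).map (fun p : X × X => p.1 + p.2)
  compactSupport : ∀ μ ∈ M, ∃ K : Set X, IsCompact K ∧ (↑μ : Measure X) K = 1

namespace Stmt17Aux

open scoped ENNReal

set_option linter.unusedSectionVars false
set_option linter.unusedSimpArgs false

section PartOne

variable {X : Type*} [NormedAddCommGroup X] [NormedSpace ℝ X]
    [SecondCountableTopology X] [MeasurableSpace X] [BorelSpace X]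

/-- translates of an open set: lower semicontinuity of the measure. -/
lemma isOpen_translate (F : Measure X) {Ω : Set X} (hΩ : IsOpen Ω) (c : ℝ≥0∞) :
    IsOpen {z : X | c < F {x | x + z ∈ Ω}} := by
  rw [← isClosed_compl_iff]
  apply IsSeqClosed.isClosed
  intro u z hu hz
  simp only [mem_compl_iff, mem_ofPred_eq, not_lt] at hu ⊢
  have hmeas : ∀ w : X, MeasurableSet {x | x + w ∈ Ω} := fun w =>
    (hΩ.preimage (continuous_id.add continuous_const)).measurableSet
  have h1 : F {x | x + z ∈ Ω} ≤
      ∫⁻ x, liminf (fun n => indicator {x | x + u n ∈ Ω} (1 : X → ℝ≥0∞) x) atTop ∂F := by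
    rw [← lintegral_indicator_one (hmeas z)]
    apply lintegral_mono
    intro x
    by_cases hx : x ∈ {x | x + z ∈ Ω}
    · rw [indicator_of_mem hx]
      refine le_liminf_of_le (by isBoundedDefault) ?_
      have : Tendsto (fun n => x + u n) atTop (𝓝 (x + z)) := hz.const_add x
      filter_upwards [this.eventually (hΩ.mem_nhds hx)] with n hn
      rw [indicator_of_mem (by exact hn)]
    · rw [indicator_of_notMem hx]; exact zero_le
  refine h1.trans ((lintegral_liminf_le fun n => measurable_one.indicator (hmeas _)).trans ?_)
  refine (liminf_le_liminf (Eventually.of_forall fun n => ?_) ).trans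
    (liminf_const (f := (atTop : Filter ℕ)) c).le
  rw [lintegral_indicator_one (hmeas _)]
  exact hu n

lemma conv_apply_eq (μ ν : Measure X) [SFinite μ] [SFinite ν] {Ω : Set X} (hΩ : MeasurableSet Ω) :
    (μ.conv ν) Ω = ∫⁻ z, μ {x | x + z ∈ Ω} ∂ν := by
  rw [Measure.conv, Measure.map_apply (by fun_prop) hΩ,
    Measure.prod_apply_symm (measurable_add hΩ)]
  rfl

variable (p : ℝ)

/-- the p-th moment -/
noncomputable def mom (ν : Measure X) : ℝ≥0∞ := ∫⁻ x, (‖x‖₊ : ℝ≥0∞) ^ p ∂ν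

variable {p}

lemma markov (hp : 0 < p) (ν : Measure X) {δ : ℝ} (hδ : 0 < δ) :
    ν {z | δ ≤ ‖z‖} * ENNReal.ofReal δ ^ p ≤ mom p ν := by
  have := mul_meas_ge_le_lintegral (μ := ν) (f := fun x : X => (‖x‖₊ : ℝ≥0∞) ^ p)
    (by fun_prop) (ENNReal.ofReal δ ^ p)
  rw [mul_comm]
  refine le_trans ?_ this
  gcongr
  intro hz
  gcongr
  rw [← enorm_eq_nnnorm, ← ofReal_norm]
  exact ENNReal.ofReal_le_ofReal hz

lemma conv_near (hp : 0 < p) (F : Measure X) [IsFiniteMeasure F] {Ω : Set X} (hΩ : IsOpen Ω)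
    {a : ℝ≥0∞} (ha : a < F Ω) :
    ∃ τ : ℝ≥0∞, 0 < τ ∧ ∀ ρ : Measure X, IsProbabilityMeasure ρ → mom p ρ ≤ τ →
      a < (F.conv ρ) Ω := by
  obtain ⟨b, hab, hb⟩ := exists_between ha
  have hbt : b ≠ ⊤ := (hb.trans (measure_lt_top F Ω)).ne
  have h0 : (0 : X) ∈ {z : X | b < F {x | x + z ∈ Ω}} := by simpa using hb
  obtain ⟨δ, hδ, hball⟩ := Metric.isOpen_iff.1 (isOpen_translate F hΩ b) 0 h0
  have hδ0 : ENNReal.ofReal δ ^ p ≠ 0 := by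
    simp [ENNReal.rpow_eq_zero_iff, hδ, hp.le]
  have hδt : ENNReal.ofReal δ ^ p ≠ ⊤ := by
    simp [ENNReal.rpow_eq_top_iff, hp.le, hp.not_gt]
  have hb0 : b ≠ 0 := (bot_le.trans_lt hab).ne'
  obtain ⟨s, hs0, hs⟩ := exists_between (show (0 : ℝ≥0∞) < (b - a) / b from
    ENNReal.div_pos (tsub_pos_of_lt hab).ne' hbt)
  refine ⟨s * ENNReal.ofReal δ ^ p, by positivity, fun ρ _ hρ => ?_⟩
  have hm : ρ {z | δ ≤ ‖z‖} ≤ s := by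
    have := (markov hp ρ hδ).trans hρ
    exact (ENNReal.mul_le_mul_iff_left hδ0 hδt).1 this
  have hS : MeasurableSet {z : X | δ ≤ ‖z‖} := measurableSet_le measurable_const measurable_norm
  have key : b ≤ (F.conv ρ) Ω + b * ρ {z | δ ≤ ‖z‖} := by
    rw [conv_apply_eq _ _ hΩ.measurableSet]
    calc b = ∫⁻ z, b ∂ρ := by simp
      _ ≤ ∫⁻ z, F {x | x + z ∈ Ω} + indicator {z | δ ≤ ‖z‖} (fun _ => b) z ∂ρ := by
          apply lintegral_mono
          intro z
          by_cases hz : δ ≤ ‖z‖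
          · simp [indicator, hz]
          · have : z ∈ Metric.ball (0 : X) δ := by simpa using hz
            exact le_add_right (hball this).le
      _ = _ := by
          rw [lintegral_add_right _ (measurable_const.indicator hS), lintegral_indicator hS]
          simp
  by_contra hcon
  push Not at hcon
  have h1 : b * ρ {z | δ ≤ ‖z‖} < b - a := by
    calc b * ρ {z | δ ≤ ‖z‖} ≤ b * s := by gcongr
      _ < b * ((b - a) / b) := ENNReal.mul_lt_mul_right hb0 hbt hs
      _ = b - a := ENNReal.mul_div_cancel hb0 hbt
  have hat : a ≠ ⊤ := (hab.trans_le le_top).ne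
  have : b < a + (b - a) := key.trans_lt (ENNReal.add_lt_add_of_le_of_lt (ne_top_of_le_ne_top hat hcon) hcon h1)
  rw [add_tsub_cancel_of_le hab.le] at this
  exact lt_irrefl _ this


variable {T : X →L[ℝ] X} {M : Set (ProbabilityMeasure X)} {C : ℝ}

variable (T M p C) in
/-- The main hypothesis. -/
def Hyp : Prop := ∀ Ω : Set X, IsOpen Ω → Ω.Nonempty → (⇑T) ⁻¹' Ω ⊆ Ω →
      ∃ μ ∈ M, (↑μ : Measure X) Ω = 1 ∧ mom p (↑μ : Measure X) ≤ ENNReal.ofReal C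

lemma exists_small (hp : 0 < p) (hM : AdequateFamily (⇑T) M) (h : Hyp p T M C)
    (σ : Measure X) (hσ : σ.map T = σ) {Ω : Set X} (hΩ : IsOpen Ω) (hT : T ⁻¹' Ω ⊆ Ω)
    {c : ℝ≥0∞} (hne : ∃ z : X, c < σ {x | x + z ∈ Ω}) {τ : ℝ≥0∞} (hτ : 0 < τ) :
    ∃ ρ ∈ M, mom p (ρ : Measure X) ≤ τ ∧
      ∀ᵐ z ∂(ρ : Measure X), c < σ {x | x + z ∈ Ω} := by
  obtain ⟨r, hr, hrτ⟩ : ∃ r : ℝ, 0 < r ∧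
      ENNReal.ofReal r⁻¹ ^ p * ENNReal.ofReal C ≤ τ := by
    have h1 : Tendsto (fun r : ℝ => ENNReal.ofReal r⁻¹ ^ p * ENNReal.ofReal C) atTop
        (𝓝 (ENNReal.ofReal 0 ^ p * ENNReal.ofReal C)) := by
      refine ENNReal.Tendsto.mul_const ?_ (Or.inr ENNReal.ofReal_ne_top)
      exact ((ENNReal.continuous_rpow_const.tendsto _).comp
        ((ENNReal.continuous_ofReal.tendsto 0).comp tendsto_inv_atTop_zero))
    rw [ENNReal.ofReal_zero, ENNReal.zero_rpow_of_pos hp, zero_mul] at h1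
    obtain ⟨r, h2, h3⟩ := ((h1.eventually (ge_mem_nhds hτ)).and (eventually_gt_atTop 0)).exists
    exact ⟨r, h3, h2⟩
  have hr0 : r ≠ 0 := hr.ne'
  let Ω' : Set X := {z | c < σ {x | x + r⁻¹ • z ∈ Ω}}
  have hO : IsOpen Ω' := (isOpen_translate σ hΩ c).preimage (continuous_const_smul r⁻¹)
  have hN : Ω'.Nonempty := by
    obtain ⟨z, hz⟩ := hne
    refine ⟨r • z, ?_⟩
    change c < σ {x | x + r⁻¹ • r • z ∈ Ω}
    rwa [inv_smul_smul₀ hr0]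
  have hI : T ⁻¹' Ω' ⊆ Ω' := by
    intro z hz
    change c < σ {x | x + r⁻¹ • T z ∈ Ω} at hz
    change c < σ {x | x + r⁻¹ • z ∈ Ω}
    have hmeas : MeasurableSet {x | x + r⁻¹ • T z ∈ Ω} :=
      (hΩ.preimage (continuous_id.add continuous_const)).measurableSet
    rw [← hσ, Measure.map_apply T.continuous.measurable hmeas] at hz
    refine hz.trans_le (measure_mono ?_)
    intro x hx
    apply hT
    change T (x + r⁻¹ • z) ∈ Ω
    rw [map_add, map_smul]
    exact hx
  obtain ⟨μ, hμ, hμ1, hμm⟩ := h Ω' hO hN hI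
  obtain ⟨ν, hν, hνeq⟩ := hM.dilation μ hμ r hr
  have hms : Measurable (fun x : X => r⁻¹ • x) := (continuous_const_smul r⁻¹).measurable
  refine ⟨ν, hν, ?_, ?_⟩
  · rw [hνeq, mom, lintegral_map (by fun_prop) hms]
    refine le_trans ?_ hrτ
    refine le_trans (le_of_eq ?_) (mul_le_mul_right hμm _)
    rw [mom, ← lintegral_const_mul _ (by fun_prop)]
    congr 1
    ext x
    rw [← ENNReal.mul_rpow_of_nonneg _ _ hp.le, ← enorm_eq_nnnorm, ← enorm_eq_nnnorm, enorm_smul,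
      Real.enorm_of_nonneg (inv_nonneg.2 hr.le)]
  · rw [hνeq, ae_map_iff hms.aemeasurable (isOpen_translate σ hΩ c).measurableSet]
    exact (mem_ae_iff_prob_eq_one hO.measurableSet).2 hμ1

lemma restrict_inv (μ : Measure X) [IsFiniteMeasure μ] (hμ : μ.map T = μ) {Ω : Set X}
    (hΩ : IsOpen Ω) (hT : T ⁻¹' Ω ⊆ Ω) : (μ.restrict Ωᶜ).map T = μ.restrict Ωᶜ := by
  have hTm : Measurable T := T.continuous.measurable
  have hae : (T ⁻¹' Ω : Set X) =ᵐ[μ] Ω := by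
    apply ae_eq_of_subset_of_measure_ge hT
    · rw [← Measure.map_apply hTm hΩ.measurableSet, hμ]
    · exact (hTm hΩ.measurableSet).nullMeasurableSet
    · exact measure_ne_top _ _
  have : μ.restrict Ωᶜ = μ.restrict (T ⁻¹' Ωᶜ) := by
    apply Measure.restrict_congr_set
    rw [preimage_compl]
    exact hae.symm.compl
  rw [this, ← Measure.restrict_map hTm hΩ.measurableSet.compl, hμ, this]

lemma gain (hp : 0 < p) (hM : AdequateFamily (⇑T) M) (h : Hyp p T M C)
    {μ : ProbabilityMeasure X} (hμ : μ ∈ M) {Ω : Set X} (hΩ : IsOpen Ω) (hT : T ⁻¹' Ω ⊆ Ω)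
    {c : ℝ≥0∞} (hc : 0 < c)
    (hne : ∃ z : X, c < ((μ : Measure X).restrict Ωᶜ) {x | x + z ∈ Ω}) {τ : ℝ≥0∞} (hτ : 0 < τ) :
    ∃ ρ ∈ M, mom p (ρ : Measure X) ≤ τ ∧
      (μ : Measure X) Ω + c / 2 ≤ ((μ : Measure X).conv ρ) Ω := by
  set σ := (μ : Measure X).restrict Ωᶜ with hσdef
  set lam := (μ : Measure X).restrict Ω with hlam
  have hσ : σ.map T = σ := restrict_inv _ (hM.invariant μ hμ) hΩ hT
  have hct : c ≠ ⊤ := by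
    obtain ⟨z, hz⟩ := hne
    exact (hz.trans_le le_top).ne
  have hsum : (μ : Measure X) = lam + σ := (Measure.restrict_add_restrict_compl hΩ.measurableSet).symm
  have hlamΩ : lam Ω = (μ : Measure X) Ω := by simp [hlam]
  obtain ⟨τ', hτ', hnear⟩ : ∃ τ' : ℝ≥0∞, 0 < τ' ∧ ∀ ρ : Measure X, IsProbabilityMeasure ρ →
      mom p ρ ≤ τ' → lam Ω ≤ (lam.conv ρ) Ω + c / 2 := by
    by_cases h0 : lam Ω = 0
    · exact ⟨1, one_pos, fun ρ _ _ => by simp [h0]⟩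
    · obtain ⟨τ', h1, h2⟩ := conv_near hp lam hΩ
        (ENNReal.sub_lt_self (measure_ne_top lam Ω) h0 (ENNReal.half_pos hc.ne').ne')
      exact ⟨τ', h1, fun ρ hρ hm => tsub_le_iff_right.1 (h2 ρ hρ hm).le⟩
  obtain ⟨ρ, hρ, hρm, hae⟩ := exists_small hp hM h σ hσ hΩ hT hne (lt_min hτ hτ')
  refine ⟨ρ, hρ, hρm.trans (min_le_left _ _), ?_⟩
  have h1 := hnear ρ inferInstance (hρm.trans (min_le_right _ _))
  have h2 : c ≤ (σ.conv (ρ : Measure X)) Ω := by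
    rw [conv_apply_eq _ _ hΩ.measurableSet]
    calc c = ∫⁻ _, c ∂(ρ : Measure X) := by simp
      _ ≤ _ := lintegral_mono_ae (hae.mono fun z hz => hz.le)
  have h3 : ((μ : Measure X).conv ρ) Ω = (lam.conv (ρ : Measure X)) Ω + (σ.conv (ρ : Measure X)) Ω := by
    conv_lhs => rw [hsum]
    rw [Measure.add_conv, Measure.add_apply]
  rw [h3, ← hlamΩ]
  have h4 : lam Ω + c / 2 + c / 2 ≤
      (lam.conv (ρ : Measure X)) Ω + (σ.conv (ρ : Measure X)) Ω + c / 2 := by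
    rw [add_assoc, ENNReal.add_halves]
    calc lam Ω + c ≤ ((lam.conv (ρ : Measure X)) Ω + c / 2) + (σ.conv (ρ : Measure X)) Ω := by gcongr
      _ = _ := by ring
  exact (ENNReal.add_le_add_iff_right (ENNReal.div_ne_top hct (by norm_num))).1 h4

lemma exists_translate (hp : 0 < p) (hM : AdequateFamily (⇑T) M) (h : Hyp p T M C)
    {m : ProbabilityMeasure X} (hm : m ∈ M) {Ω : Set X} (hΩ : IsOpen Ω) (hT : T ⁻¹' Ω ⊆ Ω)
    (hne : Ω.Nonempty) {η : ℝ≥0∞} (hη : 0 < η) (hη1 : η < 1) :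
    ∃ z : X, 1 - η < (m : Measure X) {x | x + z ∈ Ω} := by
  obtain ⟨K, hK, hmK⟩ := hM.compactSupport m hm
  obtain ⟨u, hu⟩ := hne
  obtain ⟨r, hr, hball⟩ := Metric.isOpen_iff.1 hΩ u hu
  obtain ⟨t, htK, htfin, hcover⟩ := hK.finite_cover_balls hr
  have hKne : K.Nonempty := by
    rw [nonempty_iff_ne_empty]; rintro rfl; simp at hmK
  lift t to Finset X using htfin
  set V : Set X := ⋃ x ∈ (t : Set X), Metric.ball x r with hV
  have hVo : IsOpen V := isOpen_biUnion fun x _ => Metric.isOpen_ball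
  have hmV : (m : Measure X) V = 1 := le_antisymm prob_le_one (hmK ▸ measure_mono hcover)
  have hηt : η ≠ ⊤ := (hη1.trans_le le_top).ne
  have htne : (t.card : ℝ≥0∞) ≠ 0 := by
    obtain ⟨y, hy⟩ := hKne
    have hy' := hcover hy
    obtain ⟨i, hi, _⟩ := mem_iUnion₂.1 hy'
    simpa using Finset.ne_empty_of_mem (Finset.mem_coe.1 hi)
  have htt : (t.card : ℝ≥0∞) ≠ ⊤ := ENNReal.natCast_ne_top _
  have hη2 : 0 < η / 2 := ENNReal.half_pos hη.ne'
  obtain ⟨c, hc, hcN⟩ := exists_between (show (0 : ℝ≥0∞) < (η / 2) / t.card from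
    ENNReal.div_pos hη2.ne' htt)
  have hct : c ≠ ⊤ := (hcN.trans_le le_top).ne
  have claim : ∀ n : ℕ, ∃ ν : Measure X, IsProbabilityMeasure ν ∧ ∃ μ ∈ M,
      (μ : Measure X) = (m : Measure X).conv ν ∧ 1 - η / 2 < (μ : Measure X) V ∧
      (1 - η < (μ : Measure X) Ω ∨ n * (c / 2) ≤ (μ : Measure X) Ω) := by
    intro n
    induction n with
    | zero =>
      refine ⟨Measure.dirac 0, inferInstance, m, hm, by simp, ?_, Or.inr (by simp)⟩
      rw [hmV]
      exact ENNReal.sub_lt_self (by simp) (by simp) hη2.ne'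
    | succ n ih =>
      obtain ⟨ν, hν, μ, hμ, hμν, hμV, hor⟩ := ih
      by_cases hbig : 1 - η < (μ : Measure X) Ω
      · exact ⟨ν, hν, μ, hμ, hμν, hμV, Or.inl hbig⟩
      have hor := hor.resolve_left hbig
      push Not at hbig
      -- σ V ≥ η/2
      have h1 : η ≤ (μ : Measure X) Ωᶜ := by
        rw [prob_compl_eq_one_sub hΩ.measurableSet]
        calc η = 1 - (1 - η) := by
              rw [ENNReal.sub_sub_cancel (by simp) hη1.le]
          _ ≤ _ := tsub_le_tsub_left hbig _
      have h2 : (μ : Measure X) Vᶜ ≤ η / 2 := by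
        rw [prob_compl_eq_one_sub hVo.measurableSet]
        exact tsub_le_iff_right.2 ((tsub_le_iff_left.1 hμV.le).trans_eq rfl)
      have h3 : η / 2 ≤ ((μ : Measure X).restrict Ωᶜ) V := by
        rw [Measure.restrict_apply hVo.measurableSet]
        have : (μ : Measure X) Ωᶜ ≤ (μ : Measure X) (V ∩ Ωᶜ) + (μ : Measure X) Vᶜ := by
          refine le_trans (measure_mono ?_) (measure_union_le _ _)
          intro x hx
          by_cases hxV : x ∈ V
          · exact Or.inl ⟨hxV, hx⟩
          · exact Or.inr hxV
        have h4 : η / 2 + η / 2 ≤ (μ : Measure X) (V ∩ Ωᶜ) + η / 2 := by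
          rw [ENNReal.add_halves]
          exact h1.trans (this.trans (by gcongr))
        exact (ENNReal.add_le_add_iff_right (ENNReal.div_ne_top hηt (by norm_num))).1 h4
      obtain ⟨i, hi, hci⟩ : ∃ i ∈ t, c < ((μ : Measure X).restrict Ωᶜ) (Metric.ball i r) := by
        by_contra hcon
        push Not at hcon
        have h5 : ((μ : Measure X).restrict Ωᶜ) V ≤ t.card * c := by
          refine (measure_biUnion_finset_le t _).trans ?_
          refine (Finset.sum_le_sum hcon).trans ?_
          simp
        have h6 : t.card * c < η / 2 := by
          calc t.card * c < t.card * ((η / 2) / t.card) := ENNReal.mul_lt_mul_right htne htt hcN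
            _ = η / 2 := ENNReal.mul_div_cancel htne htt
        exact absurd (h3.trans h5) (not_le.2 h6)
      have hne' : ∃ z : X, c < ((μ : Measure X).restrict Ωᶜ) {x | x + z ∈ Ω} := by
        refine ⟨u - i, hci.trans_le (measure_mono ?_)⟩
        intro x hx
        apply hball
        rw [mem_ball_iff_norm] at hx ⊢
        convert hx using 2
        abel
      obtain ⟨τ, hτ, hnear⟩ := conv_near hp (μ : Measure X) hVo hμV
      obtain ⟨ρ, hρ, hρm, hgain⟩ := gain hp hM h hμ hΩ hT hc hne' hτ
      obtain ⟨μ', hμ', hμ'eq⟩ := hM.convolution μ hμ ρ hρ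
      change (μ' : Measure X) = (μ : Measure X).conv ρ at hμ'eq
      refine ⟨ν.conv ρ, inferInstance, μ', hμ', ?_, ?_, Or.inr ?_⟩
      · rw [hμ'eq, hμν, Measure.conv_assoc]
      · rw [hμ'eq]; exact hnear ρ inferInstance hρm
      · rw [hμ'eq]
        refine le_trans ?_ hgain
        push_cast
        rw [add_mul, one_mul]
        gcongr
  obtain ⟨n, hn⟩ := ENNReal.exists_nat_mul_gt (a := c / 2) (b := 1)
    (ENNReal.half_pos hc.ne').ne' (by simp)
  obtain ⟨ν, hν, μ, hμ, hμν, -, hor⟩ := claim n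
  have hfin : 1 - η < (μ : Measure X) Ω := by
    rcases hor with h1 | h1
    · exact h1
    · exact absurd (h1.trans prob_le_one) (not_le.2 hn)
  by_contra hcon
  push Not at hcon
  rw [hμν, conv_apply_eq _ _ hΩ.measurableSet] at hfin
  refine absurd hfin (not_lt.2 ?_)
  calc _ ≤ ∫⁻ _, (1 - η) ∂ν := lintegral_mono hcon
    _ = _ := by simp

lemma exists_perturb (hp : 0 < p) (hM : AdequateFamily (⇑T) M) (h : Hyp p T M C)
    {m : ProbabilityMeasure X} (hm : m ∈ M) {Ω : Set X} (hΩ : IsOpen Ω) (hT : T ⁻¹' Ω ⊆ Ω)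
    (hne : Ω.Nonempty) {η : ℝ≥0∞} (hη : 0 < η) (hη1 : η < 1) {τ : ℝ≥0∞} (hτ : 0 < τ) :
    ∃ ρ ∈ M, mom p (ρ : Measure X) ≤ τ ∧ 1 - η < ((m : Measure X).conv ρ) Ω := by
  obtain ⟨η', h0, h1⟩ := exists_between hη
  obtain ⟨ρ, hρ, hρm, hae⟩ := exists_small hp hM h (m : Measure X) (hM.invariant m hm) hΩ hT
    (exists_translate hp hM h hm hΩ hT hne h0 (h1.trans hη1)) hτ
  refine ⟨ρ, hρ, hρm, ?_⟩
  rw [conv_apply_eq _ _ hΩ.measurableSet]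
  calc 1 - η < 1 - η' := by
        rw [lt_tsub_iff_right]
        calc 1 - η + η' < 1 - η + η :=
              ENNReal.add_lt_add_left (by simp) h1
          _ = 1 := tsub_add_cancel_of_le hη1.le
    _ = ∫⁻ _, (1 - η') ∂(ρ : Measure X) := by simp
    _ ≤ _ := lintegral_mono_ae (hae.mono fun z hz => hz.le)


/-- cons for sequences -/
def consSeq (q : X × (ℕ → X)) : ℕ → X := fun n => Nat.casesOn n q.1 q.2

@[simp] lemma consSeq_zero (q : X × (ℕ → X)) : consSeq q 0 = q.1 := rfl

@[simp] lemma consSeq_succ (q : X × (ℕ → X)) (n : ℕ) : consSeq q (n + 1) = q.2 n := rfl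

lemma measurable_consSeq : Measurable (consSeq : X × (ℕ → X) → ℕ → X) := by
  rw [measurable_pi_iff]
  intro n
  cases n with
  | zero => exact measurable_fst
  | succ n => exact (measurable_pi_apply n).comp measurable_snd

lemma infinitePi_peel (ν : ℕ → Measure X) [∀ n, IsProbabilityMeasure (ν n)] :
    ((ν 0).prod (Measure.infinitePi fun n => ν (n + 1))).map consSeq = Measure.infinitePi ν := by
  apply Measure.eq_infinitePi
  intro s t ht
  have hms : MeasurableSet (Set.pi (s : Set ℕ) t) :=
    MeasurableSet.pi s.countable_toSet fun i _ => ht i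
  rw [Measure.map_apply measurable_consSeq hms]
  classical
  let t' : ℕ → Set X := fun i => if i ∈ s then t i else univ
  obtain ⟨N, hN⟩ : ∃ N, s ⊆ Finset.range (N + 1) := by
    obtain ⟨N, hN⟩ := s.exists_nat_subset_range
    exact ⟨N, hN.trans (Finset.range_mono (Nat.le_succ N))⟩
  have hset : consSeq ⁻¹' (Set.pi (s : Set ℕ) t) =
      (t' 0) ×ˢ (Set.pi (Finset.range N : Set ℕ) fun i => t' (i + 1)) := by
    ext q
    simp only [mem_preimage, Set.mem_pi, Finset.mem_coe, mem_prod, Finset.mem_range]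
    constructor
    · intro hq
      refine ⟨?_, fun i _ => ?_⟩
      · by_cases h0 : 0 ∈ s
        · simpa [t', h0] using hq 0 h0
        · simp [t', h0]
      · by_cases h0 : i + 1 ∈ s
        · simpa [t', h0] using hq (i + 1) h0
        · simp [t', h0]
    · rintro ⟨h0, h1⟩ i hi
      cases i with
      | zero => simpa [t', hi] using h0
      | succ i =>
        have := h1 i (by have := hN hi; simp at this; omega)
        simpa [t', hi] using this
  have ht' : ∀ i, MeasurableSet (t' i) := by
    intro i
    by_cases hi : i ∈ s
    · simpa [t', hi] using ht i
    · simp [t', hi]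
  rw [hset, Measure.prod_prod, Measure.infinitePi_pi _ (fun i _ => ht' _), mul_comm,
    ← Finset.prod_range_succ' (fun i => ν i (t' i)) N, ← Finset.prod_subset hN]
  · exact Finset.prod_congr rfl fun i hi => by simp [t', hi]
  · intro i _ hi
    simp [t', hi]

open Classical in
/-- the sum of the series when it converges absolutely, zero otherwise. -/
noncomputable def sumSeq (ω : ℕ → X) : X :=
  if ∑' i, ‖ω i‖ₑ ≠ ⊤ then ∑' i, ω i else 0

lemma measurableSet_abs : MeasurableSet {ω : ℕ → X | ∑' i, ‖ω i‖ₑ ≠ ⊤} := by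
  have : Measurable (fun ω : ℕ → X => ∑' i, ‖ω i‖ₑ) :=
    Measurable.tsum fun i => (measurable_pi_apply i).enorm
  exact (this (measurableSet_singleton ⊤)).compl

lemma summable_of_enorm [CompleteSpace X] {ω : ℕ → X} (h : ∑' i, ‖ω i‖ₑ ≠ ⊤) : Summable ω := by
  apply Summable.of_norm
  have : Summable fun i => ‖ω i‖₊ := ENNReal.tsum_coe_ne_top_iff_summable.1 h
  exact NNReal.summable_coe.2 this

lemma measurable_sumSeq [CompleteSpace X] : Measurable (sumSeq : (ℕ → X) → X) := by
  classical
  refine measurable_of_tendsto_metrizable (f := fun (n : ℕ) (ω : ℕ → X) =>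
    if ∑' i, ‖ω i‖ₑ ≠ ⊤ then ∑ i ∈ Finset.range n, ω i else 0) (fun n => ?_) ?_
  · exact Measurable.ite measurableSet_abs
      (Finset.measurable_sum _ fun i _ => measurable_pi_apply i) measurable_const
  · rw [tendsto_pi_nhds]
    intro ω
    by_cases h : ∑' i, ‖ω i‖ₑ ≠ ⊤
    · simp only [sumSeq, if_pos h]
      exact (summable_of_enorm h).hasSum.tendsto_sum_nat
    · simp only [sumSeq, if_neg h]
      exact tendsto_const_nhds

lemma sumSeq_consSeq [CompleteSpace X] (x : X) {ω : ℕ → X} (h : ∑' i, ‖ω i‖ₑ ≠ ⊤) :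
    sumSeq (consSeq (x, ω)) = x + sumSeq ω := by
  have h1 : ∑' i, ‖consSeq (x, ω) i‖ₑ = ‖x‖ₑ + ∑' i, ‖ω i‖ₑ := by
    rw [tsum_eq_zero_add' ENNReal.summable]
    rfl
  have h2 : ∑' i, ‖consSeq (x, ω) i‖ₑ ≠ ⊤ := by
    rw [h1]; simp [h]
  rw [sumSeq, sumSeq, if_pos h2, if_pos h, (summable_of_enorm h2).tsum_eq_zero_add]
  rfl

lemma tsum_rpow_le (hp : 0 < p) (a : ℕ → ℝ≥0∞) :
    (∑' i, a i) ^ p ≤ ∑' i : ℕ, (2 : ℝ≥0∞) ^ ((i + 1 : ℝ) * p) * a i ^ p := by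
  have h1 : ∑' i, a i ≤ ⨆ i, (2 : ℝ≥0∞) ^ (i + 1 : ℕ) * a i := by
    calc ∑' i, a i ≤ ∑' i : ℕ, ((2 : ℝ≥0∞)⁻¹ ^ (i + 1)) * ⨆ i, (2 : ℝ≥0∞) ^ (i + 1 : ℕ) * a i := by
          apply ENNReal.tsum_le_tsum
          intro i
          calc a i = (2 : ℝ≥0∞)⁻¹ ^ (i + 1) * ((2 : ℝ≥0∞) ^ (i + 1 : ℕ) * a i) := by
                rw [← mul_assoc, ← mul_pow, ENNReal.inv_mul_cancel (by norm_num) (by norm_num)]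
                simp
            _ ≤ _ := by
              gcongr
              exact le_iSup (fun i => (2 : ℝ≥0∞) ^ (i + 1 : ℕ) * a i) i
      _ = _ := by
        rw [ENNReal.tsum_mul_right, ENNReal.tsum_geometric_add_one, ENNReal.one_sub_inv_two, inv_inv,
          ENNReal.inv_mul_cancel (by norm_num) (by norm_num), one_mul]
  calc (∑' i, a i) ^ p ≤ (⨆ i, (2 : ℝ≥0∞) ^ (i + 1 : ℕ) * a i) ^ p := by gcongr
    _ = ⨆ i, ((2 : ℝ≥0∞) ^ (i + 1 : ℕ) * a i) ^ p :=
        (ENNReal.monotone_rpow_of_nonneg hp.le).map_iSup_of_continuousAt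
          ENNReal.continuous_rpow_const.continuousAt (by simp [hp])
    _ ≤ _ := by
        apply iSup_le
        intro i
        refine le_trans (le_of_eq ?_)
          (ENNReal.le_tsum (f := fun i : ℕ => (2 : ℝ≥0∞) ^ ((i + 1 : ℝ) * p) * a i ^ p) i)
        rw [ENNReal.mul_rpow_of_nonneg _ _ hp.le, ENNReal.rpow_mul, ← ENNReal.rpow_natCast]
        push_cast
        rfl

/-- infinite convolution -/
noncomputable def infConv (ν : ℕ → Measure X) [∀ n, IsProbabilityMeasure (ν n)] : Measure X :=
  (Measure.infinitePi ν).map sumSeq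

instance [CompleteSpace X] (ν : ℕ → Measure X) [∀ n, IsProbabilityMeasure (ν n)] :
    IsProbabilityMeasure (infConv ν) :=
  Measure.isProbabilityMeasure_map measurable_sumSeq.aemeasurable

lemma lintegral_tsum_rpow (hp : 0 < p) (ν : ℕ → Measure X) [∀ n, IsProbabilityMeasure (ν n)] :
    ∫⁻ ω, (∑' i, ‖ω i‖ₑ) ^ p ∂(Measure.infinitePi ν) ≤
      ∑' i : ℕ, (2 : ℝ≥0∞) ^ ((i + 1 : ℝ) * p) * mom p (ν i) := by
  calc _ ≤ ∫⁻ ω : ℕ → X, ∑' i : ℕ, (2 : ℝ≥0∞) ^ ((i + 1 : ℝ) * p) * ‖ω i‖ₑ ^ p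
        ∂(Measure.infinitePi ν) := lintegral_mono fun ω => tsum_rpow_le hp _
    _ = _ := by
      have hm : ∀ i : ℕ, Measurable fun ω : ℕ → X => ‖ω i‖ₑ ^ p := fun i =>
        ((measurable_pi_apply i).enorm).pow_const p
      rw [lintegral_tsum fun i => ((hm i).const_mul _).aemeasurable]
      congr 1
      ext i
      rw [lintegral_const_mul _ (hm i), mom]
      congr 1
      conv_rhs => rw [← Measure.infinitePi_map_eval ν i]
      rw [lintegral_map (by fun_prop) (measurable_pi_apply i)]
      rfl

lemma mom_infConv [CompleteSpace X] (hp : 0 < p) (ν : ℕ → Measure X)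
    [∀ n, IsProbabilityMeasure (ν n)] :
    mom p (infConv ν) ≤ ∑' i : ℕ, (2 : ℝ≥0∞) ^ ((i + 1 : ℝ) * p) * mom p (ν i) := by
  refine le_trans ?_ (lintegral_tsum_rpow hp ν)
  rw [mom, infConv, lintegral_map (by fun_prop) measurable_sumSeq]
  apply lintegral_mono
  intro ω
  change ‖sumSeq ω‖ₑ ^ p ≤ _
  refine ENNReal.rpow_le_rpow ?_ hp.le
  rw [sumSeq]
  split_ifs with h
  · exact enorm_tsum_le_tsum_enorm
  · simp

lemma infConv_peel [CompleteSpace X] (hp : 0 < p) (ν : ℕ → Measure X)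
    [∀ n, IsProbabilityMeasure (ν n)]
    (hν : ∑' i : ℕ, (2 : ℝ≥0∞) ^ ((i + 1 : ℝ) * p) * mom p (ν (i + 1)) ≠ ⊤) :
    infConv ν = (ν 0).conv (infConv fun n => ν (n + 1)) := by
  have hae : ∀ᵐ ω ∂(Measure.infinitePi fun n => ν (n + 1)), ∑' i, ‖ω i‖ₑ ≠ ⊤ := by
    have h1 := ne_top_of_le_ne_top hν (lintegral_tsum_rpow hp fun n => ν (n + 1))
    have hm : Measurable (fun ω : ℕ → X => (∑' i, ‖ω i‖ₑ) ^ p) :=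
      (Measurable.tsum fun i => (measurable_pi_apply i).enorm).pow_const p
    filter_upwards [ae_lt_top hm h1] with ω hω htop
    rw [htop, ENNReal.top_rpow_of_pos hp] at hω
    exact lt_irrefl _ hω
  have hae2 : ∀ᵐ q ∂((ν 0).prod (Measure.infinitePi fun n => ν (n + 1))),
      ∑' i, ‖q.2 i‖ₑ ≠ ⊤ :=
    Measure.quasiMeasurePreserving_snd.ae hae
  rw [infConv, infConv, Measure.conv, ← infinitePi_peel ν,
    Measure.map_map measurable_sumSeq measurable_consSeq]
  have : (ν 0).prod ((Measure.infinitePi fun n => ν (n + 1)).map sumSeq) =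
      ((ν 0).prod (Measure.infinitePi fun n => ν (n + 1))).map (Prod.map id sumSeq) := by
    conv_lhs => rw [← Measure.map_id (μ := ν 0)]
    rw [Measure.map_prod_map _ _ measurable_id measurable_sumSeq]
  rw [this, Measure.map_map (by fun_prop) (measurable_id.prodMap measurable_sumSeq)]
  apply Measure.map_congr
  filter_upwards [hae2] with q hq
  exact sumSeq_consSeq q.1 hq


lemma tendsto_of_conv (hp : 0 < p) (m : ProbabilityMeasure X) (ms : ℕ → ProbabilityMeasure X)
    (θ : ℕ → Measure X) [∀ n, IsProbabilityMeasure (θ n)]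
    (hconv : ∀ n, (m : Measure X) = (ms n : Measure X).conv (θ n))
    (hθ : Tendsto (fun n => mom p (θ n)) atTop (𝓝 0)) :
    Tendsto ms atTop (𝓝 m) := by
  rw [tendsto_iff_forall_lipschitz_integral_tendsto]
  rintro f ⟨B, hB⟩ ⟨L, hL⟩
  have hB0 : 0 ≤ B := dist_nonneg.trans (hB 0 0)
  have hfm : Measurable f := hL.continuous.measurable
  have hfb : ∀ x, ‖f x‖ ≤ ‖f 0‖ + B := fun x => by
    have := hB x 0
    rw [dist_eq_norm] at this
    calc ‖f x‖ = ‖f 0 + (f x - f 0)‖ := by congr 1; ring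
      _ ≤ _ := (norm_add_le _ _).trans (by gcongr)
  have main : ∀ δ : ℝ, 0 < δ → ∀ n, dist (∫ x, f x ∂(ms n : Measure X)) (∫ x, f x ∂(m : Measure X)) ≤
      L * δ + B * (θ n).real {z | δ ≤ ‖z‖} := by
    intro δ hδ n
    have hS : MeasurableSet {z : X | δ ≤ ‖z‖} := measurableSet_le measurable_const measurable_norm
    have i1 : Integrable (fun q : X × X => f (q.1 + q.2)) ((ms n : Measure X).prod (θ n)) :=
      Integrable.of_bound (hfm.comp (measurable_fst.add measurable_snd)).aestronglyMeasurable (‖f 0‖ + B) (Eventually.of_forall fun q => hfb _)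
    have i2 : Integrable (fun q : X × X => f q.1) ((ms n : Measure X).prod (θ n)) :=
      Integrable.of_bound (hfm.comp measurable_fst).aestronglyMeasurable (‖f 0‖ + B) (Eventually.of_forall fun q => hfb _)
    have e1 : ∫ x, f x ∂(m : Measure X) = ∫ q, f (q.1 + q.2) ∂((ms n : Measure X).prod (θ n)) := by
      rw [hconv n, Measure.conv, integral_map (by fun_prop) (by fun_prop)]
    have e2 : ∫ x, f x ∂(ms n : Measure X) = ∫ q, f q.1 ∂((ms n : Measure X).prod (θ n)) := by
      rw [integral_fun_fst]; simp
    rw [e1, e2, dist_comm, dist_eq_norm, ← integral_sub i1 i2]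
    have i3 : Integrable (fun q : X × X => L * δ + B * indicator {z : X | δ ≤ ‖z‖} 1 q.2)
        ((ms n : Measure X).prod (θ n)) := by
      refine (integrable_const _).add (Integrable.const_mul ?_ _)
      refine Integrable.of_bound
        (((measurable_one.indicator hS).comp measurable_snd).aestronglyMeasurable) 1
        (Eventually.of_forall fun q => ?_)
      by_cases hq : q.2 ∈ {z : X | δ ≤ ‖z‖}
      · simp [indicator_of_mem hq]
      · simp [indicator_of_notMem hq]
    refine (norm_integral_le_of_norm_le i3 (Eventually.of_forall fun q => ?_)).trans_eq ?_
    · rw [← dist_eq_norm]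
      by_cases hq : q.2 ∈ {z : X | δ ≤ ‖z‖}
      · rw [indicator_of_mem hq]
        have := hB (q.1 + q.2) q.1
        simp only [Pi.one_apply, mul_one]
        have : 0 ≤ L * δ := by positivity
        linarith
      · rw [indicator_of_notMem hq]
        have h1 := hL.dist_le_mul (q.1 + q.2) q.1
        have h2 : dist (q.1 + q.2) q.1 ≤ δ := by
          rw [dist_eq_norm, add_sub_cancel_left]
          exact (not_le.1 hq).le
        simp only [mul_zero, add_zero]
        exact h1.trans (by gcongr)
    · rw [integral_fun_snd (fun z : X => L * δ + B * indicator {z : X | δ ≤ ‖z‖} 1 z)]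
      have i4 : Integrable (indicator {z : X | δ ≤ ‖z‖} (1 : X → ℝ)) (θ n) :=
        (integrable_const (1 : ℝ)).indicator hS
      have i5 : ∫ z, B * indicator {z : X | δ ≤ ‖z‖} (1 : X → ℝ) z ∂(θ n) =
          B * (θ n).real {z | δ ≤ ‖z‖} := by
        rw [integral_const_mul, integral_indicator_one hS]
      rw [integral_add (integrable_const _) (i4.const_mul _), i5]
      simp
  rw [Metric.tendsto_atTop]
  intro ε hε
  obtain ⟨δ, hδ, hLδ⟩ : ∃ δ : ℝ, 0 < δ ∧ L * δ < ε / 2 := by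
    refine ⟨ε / 2 / (L + 1), by positivity, ?_⟩
    rw [mul_div_assoc', div_lt_iff₀ (by positivity)]
    nlinarith [L.2]
  have hsmall : Tendsto (fun n => (θ n).real {z : X | δ ≤ ‖z‖}) atTop (𝓝 0) := by
    have hδ0 : ENNReal.ofReal δ ^ p ≠ 0 := by
      simp [ENNReal.rpow_eq_zero_iff, hδ, hp.le]
    have hδt : ENNReal.ofReal δ ^ p ≠ ⊤ := by
      simp [ENNReal.rpow_eq_top_iff, hp.le, hp.not_gt]
    have h1 : Tendsto (fun n => θ n {z : X | δ ≤ ‖z‖}) atTop (𝓝 0) := by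
      have h2 : Tendsto (fun n => mom p (θ n) / ENNReal.ofReal δ ^ p) atTop
          (𝓝 (0 / ENNReal.ofReal δ ^ p)) := ENNReal.Tendsto.div_const hθ (Or.inr hδ0)
      rw [ENNReal.zero_div] at h2
      refine tendsto_of_tendsto_of_tendsto_of_le_of_le tendsto_const_nhds h2
        (fun n => zero_le) fun n => ?_
      rw [ENNReal.le_div_iff_mul_le (Or.inl hδ0) (Or.inl hδt)]
      exact markov hp _ hδ
    have := (ENNReal.tendsto_toReal ENNReal.zero_ne_top).comp h1
    rw [ENNReal.toReal_zero] at this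
    exact this
  have h3 : Tendsto (fun n => B * (θ n).real {z : X | δ ≤ ‖z‖}) atTop (𝓝 0) := by
    simpa using hsmall.const_mul B
  obtain ⟨N, hN⟩ := (eventually_atTop).1 (h3.eventually (gt_mem_nhds (half_pos hε)))
  refine ⟨N, fun n hn => (main δ hδ n).trans_lt ?_⟩
  have := hN n hn
  linarith

lemma mom_conv_lt_top (hp : 0 < p) (μ ν : Measure X) [IsProbabilityMeasure μ]
    [IsProbabilityMeasure ν] (hμ : mom p μ < ⊤) (hν : mom p ν < ⊤) : mom p (μ.conv ν) < ⊤ := by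
  have hb : ∀ x y : X, (‖x + y‖₊ : ℝ≥0∞) ^ p ≤
      2 ^ p * ((‖x‖₊ : ℝ≥0∞) ^ p + (‖y‖₊ : ℝ≥0∞) ^ p) := by
    intro x y
    have h1 : (‖x + y‖₊ : ℝ≥0∞) ≤ 2 * max (‖x‖₊ : ℝ≥0∞) ‖y‖₊ := by
      calc (‖x + y‖₊ : ℝ≥0∞) ≤ ‖x‖₊ + ‖y‖₊ := by exact_mod_cast nnnorm_add_le x y
        _ ≤ max (‖x‖₊ : ℝ≥0∞) ‖y‖₊ + max (‖x‖₊ : ℝ≥0∞) ‖y‖₊ :=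
          add_le_add (le_max_left _ _) (le_max_right _ _)
        _ = _ := (two_mul _).symm
    refine (ENNReal.rpow_le_rpow h1 hp.le).trans ?_
    rw [ENNReal.mul_rpow_of_nonneg _ _ hp.le]
    gcongr
    rcases le_total (‖x‖₊ : ℝ≥0∞) ‖y‖₊ with h | h
    · rw [max_eq_right h]; exact le_add_self
    · rw [max_eq_left h]; exact le_self_add
  rw [mom, Measure.lintegral_conv (by fun_prop)]
  calc _ ≤ ∫⁻ x, ∫⁻ y, 2 ^ p * ((‖x‖₊ : ℝ≥0∞) ^ p + (‖y‖₊ : ℝ≥0∞) ^ p) ∂ν ∂μ :=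
        lintegral_mono fun x => lintegral_mono fun y => hb x y
    _ = 2 ^ p * (mom p μ + mom p ν) := by
        have : ∀ x : X, ∫⁻ y, 2 ^ p * ((‖x‖₊ : ℝ≥0∞) ^ p + (‖y‖₊ : ℝ≥0∞) ^ p) ∂ν =
            2 ^ p * ((‖x‖₊ : ℝ≥0∞) ^ p + mom p ν) := by
          intro x
          rw [lintegral_const_mul _ (by fun_prop), lintegral_add_left (by fun_prop)]
          simp [mom]
        simp_rw [this]
        rw [lintegral_const_mul _ (by fun_prop), lintegral_add_left (by fun_prop)]
        simp [mom]
    _ < ⊤ := by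
        refine ENNReal.mul_lt_top ?_ (ENNReal.add_lt_top.2 ⟨hμ, hν⟩)
        exact ENNReal.rpow_lt_top_of_nonneg hp.le (by norm_num)

variable (p) in
/-- weights -/
noncomputable def wt (k : ℕ) : ℝ≥0∞ := ((2 : ℝ≥0∞) ^ ((k + 1 : ℝ) * p))⁻¹ * 2⁻¹ ^ (k + 1)

lemma two_rpow_ne_top (hp : 0 < p) (k : ℕ) : (2 : ℝ≥0∞) ^ ((k + 1 : ℝ) * p) ≠ ⊤ :=
  ENNReal.rpow_ne_top_of_nonneg (by positivity) (by norm_num)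

lemma two_rpow_ne_zero (k : ℕ) : (2 : ℝ≥0∞) ^ ((k + 1 : ℝ) * p) ≠ 0 := by
  simp [ENNReal.rpow_eq_zero_iff]

lemma wt_pos (hp : 0 < p) (k : ℕ) : 0 < wt p k := by
  refine ENNReal.mul_pos ?_ ?_
  · exact ENNReal.inv_ne_zero.2 (two_rpow_ne_top hp k)
  · simp

lemma step (hp : 0 < p) (hM : AdequateFamily (⇑T) M) (h : Hyp p T M C)
    {Ω : Set X} (hΩ : IsOpen Ω) (hT : T ⁻¹' Ω ⊆ Ω) (hne : Ω.Nonempty) (k : ℕ)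
    {m : ProbabilityMeasure X} (hm : m ∈ M) {t : ℝ≥0∞} (ht : 0 < t) :
    ∃ ν m' : ProbabilityMeasure X, ∃ t' : ℝ≥0∞, m' ∈ M ∧ 0 < t' ∧ t' ≤ t ∧
      (m' : Measure X) = (m : Measure X).conv ν ∧ mom p (ν : Measure X) ≤ t * wt p k ∧
      ∀ ρ : Measure X, IsProbabilityMeasure ρ → mom p ρ ≤ t' →
        1 - 2⁻¹ ^ (k + 1) < ((m' : Measure X).conv ρ) Ω := by
  have hη1 : (2 : ℝ≥0∞)⁻¹ ^ (k + 1) < 1 := pow_lt_one₀ (by simp) (by simp) (by simp)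
  obtain ⟨ν, hν, hνm, hbig⟩ := exists_perturb hp hM h hm hΩ hT hne
    (η := 2⁻¹ ^ (k + 1)) (by simp [pos_iff_ne_zero]) hη1
    (ENNReal.mul_pos ht.ne' (wt_pos hp k).ne')
  obtain ⟨m', hm', hm'eq⟩ := hM.convolution m hm ν hν
  change (m' : Measure X) = (m : Measure X).conv ν at hm'eq
  rw [← hm'eq] at hbig
  obtain ⟨τ, hτ, hnear⟩ := conv_near hp (m' : Measure X) hΩ hbig
  exact ⟨ν, m', min t τ, hm', lt_min ht hτ, min_le_left _ _, hm'eq, hνm,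
    fun ρ hρ hρm => hnear ρ hρ (hρm.trans (min_le_right _ _))⟩

lemma exists_seq (hp : 0 < p) (hM : AdequateFamily (⇑T) M) (h : Hyp p T M C)
    (O : ℕ → Set X) (hO : ∀ k, IsOpen (O k)) (hOT : ∀ k, T ⁻¹' (O k) ⊆ O k)
    (hOne : ∀ k, (O k).Nonempty) :
    ∃ (ms ν : ℕ → ProbabilityMeasure X) (t : ℕ → ℝ≥0∞), (∀ k, ms k ∈ M) ∧
      mom p (ms 0 : Measure X) < ⊤ ∧ t 0 = 1 ∧ Antitone t ∧
      (∀ k, (ms (k + 1) : Measure X) = (ms k : Measure X).conv (ν k)) ∧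
      (∀ k, mom p (ν k : Measure X) ≤ t k * wt p k) ∧
      ∀ k, ∀ ρ : Measure X, IsProbabilityMeasure ρ → mom p ρ ≤ t (k + 1) →
        1 - 2⁻¹ ^ (k + 1) < ((ms (k + 1) : Measure X).conv ρ) (O k) := by
  obtain ⟨m0, hm0, -, hm0m⟩ := h univ isOpen_univ ⟨0, trivial⟩ (by simp)
  let S := {s : ProbabilityMeasure X × ℝ≥0∞ // s.1 ∈ M ∧ 0 < s.2}
  have hstep : ∀ (k : ℕ) (s : S), ∃ q : S × ProbabilityMeasure X, q.1.1.2 ≤ s.1.2 ∧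
      (q.1.1.1 : Measure X) = (s.1.1 : Measure X).conv q.2 ∧
      mom p (q.2 : Measure X) ≤ s.1.2 * wt p k ∧
      ∀ ρ : Measure X, IsProbabilityMeasure ρ → mom p ρ ≤ q.1.1.2 →
        1 - 2⁻¹ ^ (k + 1) < ((q.1.1.1 : Measure X).conv ρ) (O k) := by
    rintro k ⟨⟨m, t⟩, hm, ht⟩
    obtain ⟨ν, m', t', h1, h2, h3, h4, h5, h6⟩ :=
      step hp hM h (hO k) (hOT k) (hOne k) k hm ht
    exact ⟨⟨⟨⟨m', t'⟩, h1, h2⟩, ν⟩, h3, h4, h5, h6⟩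
  choose F hF1 hF2 hF3 hF4 using hstep
  let s : ℕ → S := fun n => Nat.rec ⟨⟨m0, 1⟩, hm0, one_pos⟩ (fun k s => (F k s).1) n
  refine ⟨fun k => (s k).1.1, fun k => (F k (s k)).2, fun k => (s k).1.2, fun k => (s k).2.1,
    hm0m.trans_lt ENNReal.ofReal_lt_top, rfl, antitone_nat_of_succ_le fun k => hF1 k (s k),
    fun k => hF2 k (s k), fun k => hF3 k (s k), fun k => hF4 k (s k)⟩

lemma partOne [CompleteSpace X] (hp : 0 < p) (hM : AdequateFamily (⇑T) M) (h : Hyp p T M C)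
    (O : ℕ → Set X) (hO : ∀ k, IsOpen (O k)) (hOT : ∀ k, T ⁻¹' (O k) ⊆ O k)
    (hOne : ∀ k, (O k).Nonempty) :
    ∃ m ∈ closure M, mom p (m : Measure X) < ⊤ ∧
      ∀ k, 1 - 2⁻¹ ^ (k + 1) < (m : Measure X) (O k) := by
  obtain ⟨ms, ν, t, hms, hm0, ht0, hanti, hrec, hmom, hnear⟩ := exists_seq hp hM h O hO hOT hOne
  let θ : ℕ → Measure X := fun k => infConv fun i => (ν (i + k) : Measure X)
  have hsum : ∀ k, ∑' i : ℕ, (2 : ℝ≥0∞) ^ ((i + 1 : ℝ) * p) * mom p (ν (i + k) : Measure X) ≤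
      2⁻¹ ^ k * t k := by
    intro k
    calc _ ≤ ∑' i : ℕ, 2⁻¹ ^ (i + 1) * (2⁻¹ ^ k * t k) := by
          apply ENNReal.tsum_le_tsum
          intro i
          calc (2 : ℝ≥0∞) ^ ((i + 1 : ℝ) * p) * mom p (ν (i + k) : Measure X)
              ≤ (2 : ℝ≥0∞) ^ (((i + k : ℕ) + 1 : ℝ) * p) * (t k * wt p (i + k)) := by
                gcongr
                · norm_num
                · push_cast; linarith [(Nat.cast_nonneg k : (0 : ℝ) ≤ k)]
                · refine (hmom (i + k)).trans ?_
                  gcongr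
                  exact hanti (Nat.le_add_left k i)
            _ = ((2 : ℝ≥0∞) ^ (((i + k : ℕ) + 1 : ℝ) * p) *
                  ((2 : ℝ≥0∞) ^ (((i + k : ℕ) + 1 : ℝ) * p))⁻¹) * (2⁻¹ ^ (i + k + 1) * t k) := by
                rw [wt]; ring
            _ = _ := by
                rw [ENNReal.mul_inv_cancel (two_rpow_ne_zero _) (two_rpow_ne_top hp _)]
                ring
      _ = _ := by
        rw [ENNReal.tsum_mul_right, ENNReal.tsum_geometric_add_one, ENNReal.one_sub_inv_two,
          inv_inv, ENNReal.inv_mul_cancel (by norm_num) (by norm_num), one_mul]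
  have ht1 : ∀ k, t k ≤ 1 := fun k => ht0 ▸ hanti (Nat.zero_le k)
  have hpow1 : ∀ k, (2⁻¹ : ℝ≥0∞) ^ k ≤ 1 := fun k => pow_le_one₀ (by simp) (by simp)
  have hsumt : ∀ k, 2⁻¹ ^ k * t k ≤ t k := fun k =>
    (mul_le_mul_left (hpow1 k) _).trans_eq (one_mul _)
  have hθm : ∀ k, mom p (θ k) ≤ 2⁻¹ ^ k * t k := fun k => (mom_infConv hp _).trans (hsum k)
  have hθ : ∀ k, θ k = (ν k : Measure X).conv (θ (k + 1)) := by
    intro k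
    have := infConv_peel hp (fun i => (ν (i + k) : Measure X)) ?_
    · simp only [Nat.zero_add] at this
      change θ k = _ at this
      rw [this]
      congr 2
      ext i : 1
      rw [show i + 1 + k = i + (k + 1) by ring]
    · have h2 := hsum (k + 1)
      refine ne_top_of_le_ne_top ?_ ((le_of_eq ?_).trans h2)
      · exact ((hsumt _).trans (ht1 _)).trans_lt ENNReal.one_lt_top |>.ne
      · congr 1
        ext i
        rw [show i + 1 + k = i + (k + 1) by ring]
  let m : ProbabilityMeasure X := ⟨(ms 0 : Measure X).conv (θ 0), inferInstance⟩
  have hmk : ∀ k, (m : Measure X) = (ms k : Measure X).conv (θ k) := by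
    intro k
    induction k with
    | zero => rfl
    | succ k ih => rw [ih, hrec, hθ k, Measure.conv_assoc]
  have hprob : ∀ k, IsProbabilityMeasure (θ k) := fun k => by
    change IsProbabilityMeasure (infConv _); infer_instance
  refine ⟨m, ?_, ?_, fun k => ?_⟩
  · refine mem_closure_of_tendsto (tendsto_of_conv hp m ms θ hmk ?_)
      (Eventually.of_forall hms)
    have h1 : Tendsto (fun k : ℕ => (2⁻¹ : ℝ≥0∞) ^ k) atTop (𝓝 0) :=
      ENNReal.tendsto_pow_atTop_nhds_zero_of_lt_one (by simp)
    refine tendsto_of_tendsto_of_tendsto_of_le_of_le tendsto_const_nhds h1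
        (fun n => zero_le) fun n => ?_
    exact (hθm n).trans ((mul_le_mul_right (ht1 n) _).trans_eq (mul_one _))
  · exact mom_conv_lt_top hp _ _ hm0
      (((hθm 0).trans ((hsumt 0).trans (ht1 0))).trans_lt ENNReal.one_lt_top)
  · rw [hmk (k + 1)]
    exact hnear k _ (hprob _) ((hθm (k + 1)).trans (hsumt _))

end PartOne

section ErgodicDecomposition

open ProbabilityTheory

variable {α : Type*} [mα : MeasurableSpace α] {T : α → α} {μ : Measure α}

/-- the Koopman operator on `L²`. -/
noncomputable def koop (hT : MeasurePreserving T μ μ) : Lp ℝ 2 μ →L[ℝ] Lp ℝ 2 μ :=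
  (Lp.compMeasurePreservingₗᵢ (p := 2) (E := ℝ) ℝ T hT).toContinuousLinearMap

lemma koop_coe (hT : MeasurePreserving T μ μ) (g : Lp ℝ 2 μ) : koop hT g =ᵐ[μ] g ∘ T :=
  Lp.coeFn_compMeasurePreserving g hT

lemma koop_norm (hT : MeasurePreserving T μ μ) : ‖koop hT‖ ≤ 1 :=
  (Lp.compMeasurePreservingₗᵢ (p := 2) (E := ℝ) ℝ T hT).norm_toContinuousLinearMap_le

lemma fixed_eq (hT : MeasurePreserving T μ μ) :
    (koop hT : Lp ℝ 2 μ →ₗ[ℝ] Lp ℝ 2 μ).eqLocus ((1 : Lp ℝ 2 μ →L[ℝ] Lp ℝ 2 μ) :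
      Lp ℝ 2 μ →ₗ[ℝ] Lp ℝ 2 μ) =
    lpMeas ℝ ℝ (MeasurableSpace.invariants T) 2 μ := by
  ext g
  rw [mem_lpMeas_iff_aestronglyMeasurable, LinearMap.mem_eqLocus]
  change koop hT g = g ↔ _
  constructor
  · intro hg
    have h1 : (g : α → ℝ) ∘ T =ᵐ[μ] g := by
      have := koop_coe hT g
      rw [hg] at this
      exact this.symm
    have hg'm : Measurable (g : α → ℝ) := (Lp.stronglyMeasurable g).measurable
    have h2 : ∀ n : ℕ, (fun y => g (T^[n] y)) =ᵐ[μ] g := by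
      intro n
      induction n with
      | zero => exact ae_eq_rfl
      | succ n ih =>
        have := (hT.iterate n).quasiMeasurePreserving.ae_eq_comp h1
        refine EventuallyEq.trans ?_ ih
        filter_upwards [this] with y hy
        rw [Function.iterate_succ_apply']
        exact hy
    let h : α → ℝ := fun y => limsup (fun n => g (T^[n] y)) atTop
    have hh : Measurable[MeasurableSpace.invariants T] h := by
      rw [MeasurableSpace.measurable_invariants_dom]
      refine ⟨Measurable.limsup fun n => hg'm.comp (hT.measurable.iterate n), fun s _ => ?_⟩
      have : h ∘ T = h := by
        ext y
        change limsup (fun n => g (T^[n] (T y))) atTop = limsup (fun n => g (T^[n] y)) atTop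
        rw [← limsup_nat_add (fun n => g (T^[n] y)) 1]
        rfl
      rw [this]
    refine ⟨h, hh.stronglyMeasurable, ?_⟩
    filter_upwards [ae_all_iff.2 h2] with y hy
    change _ = limsup (fun n => g (T^[n] y)) atTop
    simp_rw [hy]
    exact (limsup_const _).symm
  · rintro ⟨h, hh, hgh⟩
    apply Lp.ext
    refine (koop_coe hT g).trans ?_
    have := hT.quasiMeasurePreserving.ae_eq_comp hgh
    refine this.trans ?_
    rw [MeasurableSpace.comp_eq_of_measurable_invariants hh.measurable]
    exact hgh.symm

lemma birkhoffSum_koop (hT : MeasurePreserving T μ μ) {f : α → ℝ} (hf : MemLp f 2 μ) (n : ℕ) :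
    (birkhoffSum (koop hT) id n (hf.toLp f) : Lp ℝ 2 μ) =ᵐ[μ] birkhoffSum T f n := by
  have h0 : ∀ n : ℕ, (koop hT)^[n] (hf.toLp f) =ᵐ[μ] fun y => f (T^[n] y) := by
    intro n
    induction n with
    | zero => exact hf.coeFn_toLp
    | succ n ih =>
      rw [Function.iterate_succ_apply']
      refine (koop_coe hT _).trans ?_
      exact hT.quasiMeasurePreserving.ae_eq_comp ih
  induction n with
  | zero =>
    simp only [birkhoffSum_zero, birkhoffSum_zero']
    exact Lp.coeFn_zero _ _ _
  | succ n ih =>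
    rw [birkhoffSum_succ]
    refine (Lp.coeFn_add _ _).trans ?_
    filter_upwards [ih, h0 n] with y h1 h2
    rw [Pi.add_apply, h1, birkhoffSum_succ]
    congr 1

lemma birkhoffAverage_koop (hT : MeasurePreserving T μ μ) {f : α → ℝ} (hf : MemLp f 2 μ) (n : ℕ) :
    (birkhoffAverage ℝ (koop hT) id n (hf.toLp f) : Lp ℝ 2 μ) =ᵐ[μ] birkhoffAverage ℝ T f n := by
  rw [birkhoffAverage]
  refine (Lp.coeFn_smul _ _).trans ?_
  filter_upwards [birkhoffSum_koop hT hf n] with y hy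
  rw [Pi.smul_apply, hy, birkhoffAverage]

lemma proj_congr {E : Type*} [NormedAddCommGroup E] [InnerProductSpace ℝ E] {K L : Submodule ℝ E}
    [K.HasOrthogonalProjection] [L.HasOrthogonalProjection] (h : K = L) (x : E) :
    (K.orthogonalProjectionOnto x : E) = L.orthogonalProjectionOnto x := by
  subst h
  rfl

lemma exists_subseq [IsProbabilityMeasure μ] (hT : MeasurePreserving T μ μ) {f : α → ℝ}
    (hf : MemLp f 2 μ) :
    ∃ ns : ℕ → ℕ, StrictMono ns ∧ ∀ᵐ x ∂μ, Tendsto (fun i => birkhoffAverage ℝ T f (ns i) x) atTop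
      (𝓝 ((μ[f | MeasurableSpace.invariants T]) x)) := by
  have hle := MeasurableSpace.invariants_le T
  have h1 := ContinuousLinearMap.tendsto_birkhoffAverage_orthogonalProjection (koop hT)
    (koop_norm hT) (hf.toLp f)
  have h2 : Tendsto (fun n => birkhoffAverage ℝ (koop hT) id n (hf.toLp f)) atTop
      (𝓝 (condExpL2 ℝ ℝ hle (hf.toLp f) : Lp ℝ 2 μ)) := by
    convert! h1 using 2
    have : Fact (MeasurableSpace.invariants T ≤ mα) := ⟨hle⟩
    exact proj_congr (fixed_eq hT).symm _
  rw [Lp.tendsto_Lp_iff_tendsto_eLpNorm'] at h2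
  have h3 := tendstoInMeasure_of_tendsto_eLpNorm (by norm_num)
    (fun n => Lp.aestronglyMeasurable _) (Lp.aestronglyMeasurable _) h2
  obtain ⟨ns, hns, h4⟩ := h3.exists_seq_tendsto_ae
  refine ⟨ns, hns, ?_⟩
  filter_upwards [h4, ae_all_iff.2 (fun n => birkhoffAverage_koop hT hf n),
    hf.condExpL2_ae_eq_condExp (𝕜 := ℝ) hle] with x hx1 hx2 hx3
  rw [← hx3]
  simpa only [hx2] using hx1

variable [StandardBorelSpace α] [IsProbabilityMeasure μ]

local notation "κ" => condExpKernel μ (MeasurableSpace.invariants T)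

lemma ae_kernel_ae {P : α → Prop} (h : ∀ᵐ x ∂μ, P x) : ∀ᵐ x ∂μ, ∀ᵐ y ∂(κ x), P y := by
  have hle := MeasurableSpace.invariants_le T
  refine ae_of_ae_trim hle (Measure.ae_ae_of_ae_comp ?_)
  rwa [condExpKernel_comp_trim hle]

lemma kernel_invariant_set {A : Set α} (hA : MeasurableSet[MeasurableSpace.invariants T] A) :
    ∀ᵐ x ∂μ, (κ x).real A = A.indicator (fun _ => (1 : ℝ)) x := by
  have hle := MeasurableSpace.invariants_le T
  have := condExpKernel_ae_eq_condExp (μ := μ) hle (hle _ hA)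
  refine this.trans ?_
  rw [condExp_of_stronglyMeasurable hle]
  · exact stronglyMeasurable_const.indicator hA
  · exact (integrable_const _).indicator (hle _ hA)

lemma kernel_const {g : α → ℝ} (hg : Measurable[MeasurableSpace.invariants T] g) :
    ∀ᵐ x ∂μ, ∀ᵐ y ∂(κ x), g y = g x := by
  have hle := MeasurableSpace.invariants_le T
  have h1 : ∀ᵐ x ∂μ, ∀ q : ℚ, (κ x).real {y | g y < q} =
      {y | g y < q}.indicator (fun _ => (1 : ℝ)) x :=
    ae_all_iff.2 fun q => kernel_invariant_set (hg measurableSet_Iio)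
  filter_upwards [h1] with x hx
  have h2 : ∀ q : ℚ, ∀ᵐ y ∂(κ x), (g y < q ↔ g x < q) := by
    intro q
    have hm : MeasurableSet {y | g y < q} := hle _ (hg measurableSet_Iio)
    by_cases hq : g x < q
    · have := hx q
      rw [indicator_of_mem (by exact hq)] at this
      have h3 : ∀ᵐ y ∂(κ x), y ∈ {y | g y < q} := by
        refine (mem_ae_iff_prob_eq_one hm).2 ?_
        exact (ENNReal.toReal_eq_one_iff _).1 this
      filter_upwards [h3] with y hy
      exact ⟨fun _ => hq, fun _ => hy⟩
    · have := hx q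
      rw [indicator_of_notMem (by exact hq), measureReal_eq_zero_iff] at this
      have h3 : ∀ᵐ y ∂(κ x), y ∉ {y | g y < q} := measure_eq_zero_iff_ae_notMem.1 this
      filter_upwards [h3] with y hy
      exact ⟨fun h => absurd h hy, fun h => absurd h hq⟩
  filter_upwards [ae_all_iff.2 h2] with y hy
  by_contra hne
  rcases lt_or_gt_of_ne hne with h | h
  · obtain ⟨q, h1, h2⟩ := exists_rat_btwn h
    exact absurd ((hy q).1 h1) (not_lt.2 h2.le)
  · obtain ⟨q, h1, h2⟩ := exists_rat_btwn h
    exact absurd ((hy q).2 h1) (not_lt.2 h2.le)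

lemma kernel_preimage (hT : MeasurePreserving T μ μ) {B : Set α} (hB : MeasurableSet B) :
    ∀ᵐ x ∂μ, κ x (T ⁻¹' B) = κ x B := by
  have hle := MeasurableSpace.invariants_le T
  have hTB : MeasurableSet (T ⁻¹' B) := hT.measurable hB
  have h1 := condExpKernel_ae_eq_condExp (μ := μ) hle hB
  have h2 := condExpKernel_ae_eq_condExp (μ := μ) hle hTB
  have h3 : (fun x => (κ x).real B) =ᵐ[μ] μ⟦T ⁻¹' B | MeasurableSpace.invariants T⟧ := by
    refine h1.trans ?_
    refine ae_eq_condExp_of_forall_setIntegral_eq hle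
      ((integrable_const _).indicator hTB) (fun s _ _ => integrable_condExp.integrableOn) ?_
      stronglyMeasurable_condExp.aestronglyMeasurable
    intro s hs _
    rw [setIntegral_condExp hle ((integrable_const _).indicator hB) hs,
      setIntegral_indicator hB, setIntegral_indicator hTB]
    simp only [integral_const, smul_eq_mul, mul_one, measureReal_restrict_apply_univ]
    rw [measureReal_def, measureReal_def]
    congr 1
    rw [← hT.measure_preimage ((hle _ hs).inter hB).nullMeasurableSet, preimage_inter, hs.2]
  filter_upwards [h2, h3] with x hx1 hx2
  rw [← hx1] at hx2
  exact ((ENNReal.toReal_eq_toReal_iff' (measure_ne_top _ _) (measure_ne_top _ _)).1 hx2).symm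

lemma integral_birkhoff {ν : Measure α} [IsProbabilityMeasure ν] (hν : MeasurePreserving T ν ν)
    {A B : Set α} (hA : MeasurableSet A) (hTA : T ⁻¹' A = A) (hB : MeasurableSet B) {n : ℕ}
    (hn : n ≠ 0) :
    ∫ y in A, birkhoffAverage ℝ T (B.indicator fun _ => (1 : ℝ)) n y ∂ν = ν.real (A ∩ B) := by
  simp only [birkhoffAverage, birkhoffSum, smul_eq_mul]
  rw [integral_const_mul, integral_finsetSum]
  · have : ∀ k ∈ Finset.range n, ∫ y in A, B.indicator (fun _ => (1 : ℝ)) (T^[k] y) ∂ν =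
        ν.real (A ∩ B) := by
      intro k _
      have hTk : (T^[k]) ⁻¹' A = A := by
        clear * - hTA
        induction k with
        | zero => rfl
        | succ k ih => rw [Function.iterate_succ', preimage_comp, hTA, ih]
      have hk := hν.iterate k
      have e : (fun y => B.indicator (fun _ => (1 : ℝ)) (T^[k] y)) =
          ((T^[k]) ⁻¹' B).indicator (fun _ => (1 : ℝ)) := rfl
      rw [e, setIntegral_indicator (hk.measurable hB)]
      simp only [integral_const, smul_eq_mul, mul_one, measureReal_restrict_apply_univ]
      rw [measureReal_def, measureReal_def]
      congr 1
      rw [← hk.measure_preimage (hA.inter hB).nullMeasurableSet, preimage_inter, hTk]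
    rw [Finset.sum_congr rfl this]
    simp only [Finset.sum_const, Finset.card_range, nsmul_eq_mul]
    field_simp
  · intro k _
    exact (((integrable_const (1 : ℝ)).indicator
      ((hν.measurable.iterate k) hB) : Integrable (((T^[k]) ⁻¹' B).indicator fun _ => (1 : ℝ)) ν)).integrableOn

lemma kernel_indep (hT : MeasurePreserving T μ μ) {B : Set α} (hB : MeasurableSet B) :
    ∀ᵐ x ∂μ, MeasurePreserving T (κ x) (κ x) → ∀ A, MeasurableSet A → T ⁻¹' A = A →
      (κ x).real (A ∩ B) = (κ x).real A * (κ x).real B := by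
  have hle := MeasurableSpace.invariants_le T
  have hf : MemLp (B.indicator fun _ => (1 : ℝ)) 2 μ :=
    memLp_indicator_const 2 hB 1 (Or.inr (measure_ne_top _ _))
  obtain ⟨ns, hns, hlim⟩ := exists_subseq hT hf
  have h1 : ∀ᵐ x ∂μ, Tendsto (fun i => birkhoffAverage ℝ T (B.indicator fun _ => (1 : ℝ)) (ns i) x)
      atTop (𝓝 ((κ x).real B)) := by
    filter_upwards [hlim, condExpKernel_ae_eq_condExp (μ := μ) hle hB] with x hx1 hx2
    rw [hx2]
    exact hx1
  have h2 : Measurable[MeasurableSpace.invariants T] fun x => (κ x).real B :=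
    (measurable_condExpKernel hB).ennreal_toReal
  filter_upwards [ae_kernel_ae (T := T) h1, kernel_const h2] with x hx1 hx2 hx A hA hTA
  have h3 : ∀ᵐ y ∂(κ x), Tendsto (fun i => birkhoffAverage ℝ T (B.indicator fun _ => (1 : ℝ))
      (ns i) y) atTop (𝓝 ((κ x).real B)) := by
    filter_upwards [hx1, hx2] with y hy1 hy2
    rw [← hy2]
    exact hy1
  have hb : ∀ n y, ‖birkhoffAverage ℝ T (B.indicator fun _ => (1 : ℝ)) n y‖ ≤ 1 := by
    intro n y
    rw [birkhoffAverage, norm_smul, norm_inv, Real.norm_natCast]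
    have : ‖birkhoffSum T (B.indicator fun _ => (1 : ℝ)) n y‖ ≤ n := by
      refine (norm_sum_le _ _).trans ?_
      calc _ ≤ ∑ k ∈ Finset.range n, (1 : ℝ) := by
            refine Finset.sum_le_sum fun k _ => ?_
            by_cases hk : T^[k] y ∈ B
            · rw [indicator_of_mem hk]; simp
            · rw [indicator_of_notMem hk]; simp
        _ = n := by simp
    rcases Nat.eq_zero_or_pos n with rfl | hn
    · simp
    · rw [inv_mul_le_iff₀ (by positivity)]
      simpa using this
  have hmeas : ∀ n, Measurable (birkhoffAverage ℝ T (B.indicator fun _ => (1 : ℝ)) n) := by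
    intro n
    refine Measurable.const_smul (c := (n : ℝ)⁻¹) ?_
    refine Finset.measurable_sum _ fun k _ => ?_
    exact (measurable_const.indicator hB).comp (hT.measurable.iterate k)
  have h4 : Tendsto (fun i => ∫ y in A, birkhoffAverage ℝ T (B.indicator fun _ => (1 : ℝ))
      (ns i) y ∂(κ x)) atTop (𝓝 (∫ y in A, (κ x).real B ∂(κ x))) :=
    tendsto_integral_of_dominated_convergence (fun _ => 1)
      (fun n => (hmeas _).aestronglyMeasurable) (integrable_const _)
      (fun n => Eventually.of_forall fun y => hb _ y) (ae_restrict_of_ae h3)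
  have h5 : (fun i => ∫ y in A, birkhoffAverage ℝ T (B.indicator fun _ => (1 : ℝ))
      (ns i) y ∂(κ x)) =ᶠ[atTop] fun _ => (κ x).real (A ∩ B) := by
    filter_upwards [eventually_ge_atTop 1] with i hi
    exact integral_birkhoff hx hA hTA hB (by have := hns.id_le i; simp at this; omega)
  have h6 := tendsto_nhds_unique (h4.congr' h5) tendsto_const_nhds
  rw [← h6]
  simp

lemma kernel_ergodic (hT : MeasurePreserving T μ μ) : ∀ᵐ x ∂μ, Ergodic T (κ x) := by
  let S : Set (Set α) := generateSetAlgebra (MeasurableSpace.countableGeneratingSet α)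
  have hSc : S.Countable :=
    countable_generateSetAlgebra MeasurableSpace.countable_countableGeneratingSet
  have hSgen : mα = MeasurableSpace.generateFrom S := by
    rw [generateFrom_generateSetAlgebra_eq, MeasurableSpace.generateFrom_countableGeneratingSet]
  have hSpi : IsPiSystem S := fun s hs t ht _ => isSetAlgebra_generateSetAlgebra.inter_mem hs ht
  have hSm : ∀ s ∈ S, MeasurableSet s := fun s hs => by
    rw [hSgen]; exact MeasurableSpace.measurableSet_generateFrom hs
  have h1 : ∀ᵐ x ∂μ, ∀ s ∈ S, κ x (T ⁻¹' s) = κ x s :=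
    (ae_ball_iff hSc).2 fun s hs => kernel_preimage hT (hSm s hs)
  have h2 := (ae_ball_iff hSc).2 fun s hs => kernel_indep (μ := μ) hT (hSm s hs)
  filter_upwards [h1, h2] with x hx1 hx2
  have hmp : MeasurePreserving T (κ x) (κ x) := by
    refine ⟨hT.measurable, ?_⟩
    have : IsProbabilityMeasure ((κ x).map T) :=
      Measure.isProbabilityMeasure_map hT.measurable.aemeasurable
    refine ext_of_generate_finite S hSgen hSpi (fun s hs => ?_) (by simp)
    rw [Measure.map_apply hT.measurable (hSm s hs), hx1 s hs]
  refine ⟨hmp, ⟨fun A hA hTA => ?_⟩⟩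
  have h3 : (κ x).restrict A = (κ x A) • (κ x) := by
    refine ext_of_generate_finite S hSgen hSpi (fun s hs => ?_) (by simp)
    have h4 := hx2 s hs hmp A hA hTA
    rw [measureReal_def, measureReal_def, measureReal_def, ← ENNReal.toReal_mul,
      ENNReal.toReal_eq_toReal_iff' (measure_ne_top _ _)
      (ENNReal.mul_ne_top (measure_ne_top _ _) (measure_ne_top _ _))] at h4
    rw [Measure.restrict_apply (hSm s hs), inter_comm, h4]
    simp
  have h5 : κ x A * κ x Aᶜ = 0 := by
    have := congrArg (fun ν => ν Aᶜ) h3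
    simpa [Measure.restrict_apply hA.compl] using this.symm
  rw [eventuallyConst_set']
  rcases mul_eq_zero.1 h5 with h | h
  · left
    exact ae_eq_empty.2 h
  · right
    exact ae_eq_univ.2 h

end ErgodicDecomposition

/-- points whose orbit meets `U`. -/
def hit {X : Type*} (T : X → X) (U : Set X) : Set X := ⋃ n : ℕ, (T^[n]) ⁻¹' U

lemma dense_iff {X : Type*} [TopologicalSpace X] {T : X → X} {B : Set (Set X)}
    (hB : TopologicalSpace.IsTopologicalBasis B) {U : ℕ → Set X} (hU : range U = B \ {∅}) (x : X) :
    Dense (Set.range fun n : ℕ => T^[n] x) ↔ ∀ j, x ∈ hit T (U j) := by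
  rw [hB.dense_iff]
  constructor
  · intro h j
    have hj : U j ∈ B \ {∅} := hU ▸ mem_range_self j
    obtain ⟨y, hy, n, rfl⟩ := h (U j) hj.1 (nonempty_iff_ne_empty.2 hj.2)
    exact mem_iUnion.2 ⟨n, hy⟩
  · intro h o ho hne
    have : o ∈ range U := hU ▸ ⟨ho, nonempty_iff_ne_empty.1 hne⟩
    obtain ⟨j, rfl⟩ := this
    obtain ⟨n, hn⟩ := mem_iUnion.1 (h j)
    exact ⟨_, hn, n, rfl⟩

end Stmt17Aux

theorem stmt17 {X : Type*} [NormedAddCommGroup X] [NormedSpace ℝ X] [CompleteSpace X]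
    [TopologicalSpace.SeparableSpace X] [MeasurableSpace X] [BorelSpace X]
    (T : X →L[ℝ] X) (M : Set (ProbabilityMeasure X))
    (hM : AdequateFamily (⇑T) M)
    (p : ℝ) (hp : 0 < p) (C : ℝ)
    (h : ∀ Ω : Set X, IsOpen Ω → Ω.Nonempty → (⇑T) ⁻¹' Ω ⊆ Ω →
      ∃ μ ∈ M, (↑μ : Measure X) Ω = 1 ∧
        ∫⁻ x, (‖x‖₊ : ENNReal) ^ p ∂(↑μ : Measure X) ≤ ENNReal.ofReal C) :
    (∃ m ∈ closure M,
        (↑m : Measure X) {x : X | Dense (Set.range fun n : ℕ => (⇑T)^[n] x)} = 1 ∧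
        ∫⁻ x, (‖x‖₊ : ENNReal) ^ p ∂(↑m : Measure X) < ⊤) ∧
      ∃ μ : Measure X, IsProbabilityMeasure μ ∧ Ergodic (⇑T) μ ∧
        (∀ U : Set X, IsOpen U → U.Nonempty → 0 < μ U) ∧
        ∫⁻ x, (‖x‖₊ : ENNReal) ^ p ∂μ < ⊤ := by
  have hsc : SecondCountableTopology X := UniformSpace.secondCountable_of_separable X
  obtain ⟨B, hBc, hBe, hB⟩ := TopologicalSpace.exists_countable_basis X
  have hBne : (B \ {∅}).Nonempty := by
    obtain ⟨v, hv, h0, -⟩ := hB.exists_subset_of_mem_open (mem_univ (0 : X)) isOpen_univ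
    exact ⟨v, hv, (nonempty_iff_ne_empty.1 ⟨0, h0⟩)⟩
  obtain ⟨U, hU⟩ := (hBc.mono sdiff_subset).exists_eq_range hBne
  have hUmem : ∀ j, U j ∈ B \ {∅} := fun j => hU ▸ mem_range_self j
  have hUo : ∀ j, IsOpen (U j) := fun j => hB.isOpen (hUmem j).1
  have hUne : ∀ j, (U j).Nonempty := fun j => nonempty_iff_ne_empty.2 (hUmem j).2
  have hO : ∀ j, IsOpen (Stmt17Aux.hit T (U j)) := fun j =>
    isOpen_iUnion fun n => (hUo j).preimage (T.continuous.iterate n)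
  have hsub : ∀ j, U j ⊆ Stmt17Aux.hit T (U j) := fun j x hx => mem_iUnion.2 ⟨0, hx⟩
  have hOT : ∀ j, T ⁻¹' (Stmt17Aux.hit T (U j)) ⊆ Stmt17Aux.hit T (U j) := by
    intro j x hx
    obtain ⟨n, hn⟩ := mem_iUnion.1 hx
    exact mem_iUnion.2 ⟨n + 1, hn⟩
  obtain ⟨m, hmM, hmom, hmO⟩ := Stmt17Aux.partOne hp hM (C := C) h
    (fun k => Stmt17Aux.hit T (U (Nat.unpair k).1)) (fun k => hO _) (fun k => hOT _)
    (fun k => (hUne _).mono (hsub _))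
  have hone : ∀ j, (m : Measure X) (Stmt17Aux.hit T (U j)) = 1 := by
    intro j
    refine le_antisymm prob_le_one ?_
    have h1 : Tendsto (fun i : ℕ => (1 : ENNReal) - 2⁻¹ ^ (i + 1)) atTop (𝓝 (1 - 0)) := by
      refine ENNReal.Tendsto.sub tendsto_const_nhds ?_ (Or.inl ENNReal.one_ne_top)
      exact (ENNReal.tendsto_pow_atTop_nhds_zero_of_lt_one (by simp)).comp (tendsto_add_atTop_nat 1)
    rw [tsub_zero] at h1
    refine le_of_tendsto h1 (Eventually.of_forall fun i => ?_)
    have h2 := (hmO (Nat.pair j i)).le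
    rw [Nat.unpair_pair] at h2
    refine le_trans ?_ h2
    refine tsub_le_tsub_left ?_ _
    exact pow_le_pow_of_le_one (zero_le) (by simp) (by have := Nat.right_le_pair j i; omega)
  have hHC : {x : X | Dense (Set.range fun n : ℕ => (⇑T)^[n] x)} =
      ⋂ j, Stmt17Aux.hit T (U j) := by
    ext x
    rw [mem_iInter]
    exact Stmt17Aux.dense_iff hB hU.symm x
  have hae : ∀ᵐ x ∂(m : Measure X), ∀ j, x ∈ Stmt17Aux.hit T (U j) :=
    ae_all_iff.2 fun j => (mem_ae_iff_prob_eq_one (hO j).measurableSet).2 (hone j)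
  refine ⟨⟨m, hmM, ?_, hmom⟩, ?_⟩
  · rw [hHC, ← mem_ae_iff_prob_eq_one (MeasurableSet.iInter fun j => (hO j).measurableSet)]
    filter_upwards [hae] with x hx
    exact mem_iInter.2 hx
  have hinv : MeasurePreserving T (m : Measure X) m := by
    refine ⟨T.continuous.measurable, ?_⟩
    have hcl : IsClosed {μ : ProbabilityMeasure X |
        μ.map T.continuous.measurable.aemeasurable = μ} :=
      isClosed_eq (ProbabilityMeasure.continuous_map T.continuous) continuous_id
    have hmem : m ∈ {μ : ProbabilityMeasure X |
        μ.map T.continuous.measurable.aemeasurable = μ} := by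
      refine closure_minimal (fun μ hμ => ?_) hcl hmM
      exact Subtype.ext (hM.invariant μ hμ)
    exact congrArg Subtype.val hmem
  have herg := Stmt17Aux.kernel_ergodic hinv
  have hk := Stmt17Aux.ae_kernel_ae (T := T) hae
  have hle := MeasurableSpace.invariants_le (T : X → X)
  have hmeasn : Measurable fun x : X => (‖x‖₊ : ENNReal) ^ p := by fun_prop
  have hfin : ∀ᵐ x ∂(m : Measure X), ∫⁻ y, (‖y‖₊ : ENNReal) ^ p
      ∂(ProbabilityTheory.condExpKernel (m : Measure X) (MeasurableSpace.invariants T) x) < ⊤ := by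
    refine ae_of_ae_trim hle (ae_lt_top ?_ ?_)
    · exact hmeasn.lintegral_kernel
    · rw [← Measure.lintegral_bind (ProbabilityTheory.Kernel.aemeasurable _) hmeasn.aemeasurable]
      rw [ProbabilityTheory.condExpKernel_comp_trim hle]
      exact hmom.ne
  obtain ⟨x, ⟨hx1, hx2⟩, hx3⟩ := ((herg.and hk).and hfin).exists
  refine ⟨_, inferInstance, hx1, ?_, hx3⟩
  intro V hV hVne
  obtain ⟨z, hz⟩ := hVne
  obtain ⟨v, hv, hzv, hvV⟩ := hB.exists_subset_of_mem_open hz hV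
  have : v ∈ range U := hU ▸ ⟨hv, nonempty_iff_ne_empty.1 ⟨z, hzv⟩⟩
  obtain ⟨j, rfl⟩ := this
  refine lt_of_lt_of_le ?_ (measure_mono hvV)
  rw [pos_iff_ne_zero]
  intro h0
  have h1 : ∀ᵐ y ∂(ProbabilityTheory.condExpKernel (m : Measure X)
      (MeasurableSpace.invariants T) x), y ∉ Stmt17Aux.hit T (U j) := by
    refine measure_eq_zero_iff_ae_notMem.1 (measure_iUnion_null fun n => ?_)
    rw [(hx1.toMeasurePreserving.iterate n).measure_preimage (hUo j).measurableSet.nullMeasurableSet]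
    exact h0
  obtain ⟨y, hy1, hy2⟩ := (h1.and hx2).exists
  exact hy1 (hy2 j)
end
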